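/- arXiv:2007.08210 — 6 statements merged into one kernel-verified Lean document; each statement's English description precedes it below -/
import Mathlib

section
/- Let Ω = Ω₁ × ⋯ × Ω_d, where each Ω_i ⊆ ℝ is Lebesgue-measurable of finite Lebesgue measure with (0,1] ⊆ Ω_i, equipped with Lebesgue measure, and let p⃗ = (p₁,…,p_d) with 0 < p_i ≤ ∞ for all i and 0 < min{p₁,…,p_d} < ∞. Then for every ε > 0 the mixed Lebesgue space L_{p⃗}(Ω) is not embedded into L_{min{p₁,…,p_d}+ε}(Ω): there exists a measurable function f on Ω with ‖f‖_{p⃗} < ∞ but whose L_{min{p₁,…,p_d}+ε}(Ω)-norm is infinite. -/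
open MeasureTheory ENNReal Set Filter

noncomputable section

/-- One-variable `L_p` quasi-norm of an `ℝ≥0∞`-valued function (essential sup if `p = ∞`). -/
def lpNorm1 {α : Type} [MeasurableSpace α] (p : ℝ≥0∞) (μ : Measure α)
    (g : α → ℝ≥0∞) : ℝ≥0∞ :=
  if p = ∞ then essSup g μ else (∫⁻ x, g x ^ p.toReal ∂μ) ^ (1 / p.toReal)

/-- Mixed Lebesgue quasi-norm of an `ℝ≥0∞`-valued function on a product space:
the first coordinate is integrated innermost. -/
def mixedNormE : {d : ℕ} → {α : Fin d → Type} →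
    [inst : ∀ i, MeasurableSpace (α i)] → (μ : ∀ i, Measure (α i)) →
    (p : Fin d → ℝ≥0∞) → ((∀ i, α i) → ℝ≥0∞) → ℝ≥0∞
  | 0, _, _, _, _, f => f finZeroElim
  | (d + 1), α, inst, μ, p, f =>
      @mixedNormE d (fun i => α i.succ) (fun i => inst i.succ)
        (fun i => μ i.succ) (fun i => p i.succ)
        (fun y => lpNorm1 (p 0) (μ 0) fun x => f (Fin.cons x y))

/-- Mixed Lebesgue quasi-norm `‖f‖_{p⃗}` of a real-valued function. -/
def mixedNorm {d : ℕ} {α : Fin d → Type} [∀ i, MeasurableSpace (α i)]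
    (μ : ∀ i, Measure (α i)) (p : Fin d → ℝ≥0∞) (f : (∀ i, α i) → ℝ) : ℝ≥0∞ :=
  mixedNormE μ p fun x => ENNReal.ofReal |f x|

/-- Mixed Lorentz quasi-norm `‖f‖_{L_{p⃗,q}}`. -/
def mixedLorentzNorm {d : ℕ} {α : Fin d → Type} [∀ i, MeasurableSpace (α i)]
    (μ : ∀ i, Measure (α i)) (p : Fin d → ℝ≥0∞) (q : ℝ≥0∞) (f : (∀ i, α i) → ℝ) : ℝ≥0∞ :=
  if q = ∞ then
    ⨆ (u : ℝ) (_ : 0 < u),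
      ENNReal.ofReal u * mixedNorm μ p ({x | u < |f x|}.indicator fun _ => (1 : ℝ))
  else
    (∫⁻ u in Set.Ioi (0 : ℝ),
        (ENNReal.ofReal u * mixedNorm μ p ({x | u < |f x|}.indicator fun _ => (1 : ℝ))) ^ q.toReal
          / ENNReal.ofReal u) ^ (1 / q.toReal)

/-- Non-increasing rearrangement `f^*(t)` (with `inf ∅ = ∞`). -/
def rearr {α : Type} [MeasurableSpace α] (μ : Measure α) (f : α → ℝ) (t : ℝ) : ℝ≥0∞ :=
  sInf {s : ℝ≥0∞ | μ {x | s < ENNReal.ofReal |f x|} ≤ ENNReal.ofReal t}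

/-- Growth envelope function of the quasi-normed function space given by the quasi-norm `N`. -/
def growthEnv {α : Type} [MeasurableSpace α] (μ : Measure α)
    (N : (α → ℝ) → ℝ≥0∞) (t : ℝ) : ℝ≥0∞ :=
  ⨆ (f : α → ℝ) (_ : Measurable f) (_ : N f ≤ 1), rearr μ f t

/-- The Hardy-type functional `( ∫_0^ε ( t^{pinv} f^*(t) )^v dt/t )^{1/v}`,
with the usual `sup` modification for `v = ∞`. -/
def hardy {α : Type} [MeasurableSpace α] (μ : Measure α)
    (pinv : ℝ) (v : ℝ≥0∞) (ε : ℝ) (f : α → ℝ) : ℝ≥0∞ :=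
  if v = ∞ then ⨆ (t : ℝ) (_ : t ∈ Set.Ioo 0 ε), ENNReal.ofReal t ^ pinv * rearr μ f t
  else
    (∫⁻ t in Set.Ioo (0 : ℝ) ε,
        (ENNReal.ofReal t ^ pinv * rearr μ f t) ^ v.toReal / ENNReal.ofReal t) ^ (1 / v.toReal)

/-- The modular `ϱ_{p(·)}(f) = ∫ |f(x)|^{p(x)} dμ(x)`. -/
def varModular {α : Type} [MeasurableSpace α] (μ : Measure α)
    (p : α → ℝ) (f : α → ℝ) : ℝ≥0∞ :=
  ∫⁻ x, ENNReal.ofReal (|f x| ^ p x) ∂μ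

/-- The variable Lebesgue quasi-norm `‖f‖_{p(·)}`. -/
def varNorm {α : Type} [MeasurableSpace α] (μ : Measure α)
    (p : α → ℝ) (f : α → ℝ) : ℝ≥0∞ :=
  ⨅ (l : ℝ) (_ : 0 < l) (_ : varModular μ p (fun x => f x / l) ≤ 1), ENNReal.ofReal l

/-- The variable Lorentz quasi-norm `‖f‖_{L_{p(·),q}}`. -/
def varLorentzNorm {α : Type} [MeasurableSpace α] (μ : Measure α)
    (p : α → ℝ) (q : ℝ≥0∞) (f : α → ℝ) : ℝ≥0∞ :=
  if q = ∞ then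
    ⨆ (u : ℝ) (_ : 0 < u),
      ENNReal.ofReal u * varNorm μ p ({x | u < |f x|}.indicator fun _ => (1 : ℝ))
  else
    (∫⁻ u in Set.Ioi (0 : ℝ),
        (ENNReal.ofReal u * varNorm μ p ({x | u < |f x|}.indicator fun _ => (1 : ℝ))) ^ q.toReal
          / ENNReal.ofReal u) ^ (1 / q.toReal)

/-- Local log-Hölder continuity at a point `x₀`. -/
def LocLogHolderAt {E : Type} [PseudoMetricSpace E] (p : E → ℝ) (x₀ : E) : Prop :=
  ∃ C₀ > (0 : ℝ), ∀ x, dist x x₀ < 1 / 2 → |p x - p x₀| ≤ C₀ / (-Real.log (dist x x₀))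

/-- Local log-Hölder continuity (at every point, with a uniform constant). -/
def LocLogHolder {E : Type} [PseudoMetricSpace E] (p : E → ℝ) : Prop :=
  ∃ C₀ > (0 : ℝ), ∀ x y, dist x y < 1 / 2 → |p x - p y| ≤ C₀ / (-Real.log (dist x y))

end

theorem aux_const {α : Type} [MeasurableSpace α] (p : ℝ≥0∞) (hp : 0 < p) (μ : Measure α)
    (hμ : μ ≠ 0) (c : ℝ≥0∞) :
    lpNorm1 p μ (fun _ => c) = c * (μ Set.univ) ^ (1 / p.toReal) := by
  unfold lpNorm1
  split_ifs with h
  · rw [essSup_const c hμ]; simp [h]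
  · have hp' : 0 < p.toReal := ENNReal.toReal_pos hp.ne' h
    rw [lintegral_const, ENNReal.mul_rpow_of_nonneg _ _ (by positivity), ← ENNReal.rpow_mul,
      mul_one_div_cancel hp'.ne', ENNReal.rpow_one]

theorem aux_mul {α : Type} [MeasurableSpace α] (p : ℝ≥0∞) (hp : 0 < p) (hp' : p ≠ ∞)
    (μ : Measure α) (g : α → ℝ≥0∞) (hg : lpNorm1 p μ g < ∞) (C : ℝ≥0∞) (hC : C < ∞) :
    lpNorm1 p μ (fun x => g x * C) < ∞ := by
  unfold lpNorm1 at *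
  rw [if_neg hp'] at *
  have h0 : 0 < p.toReal := ENNReal.toReal_pos hp.ne' hp'
  simp_rw [ENNReal.mul_rpow_of_nonneg _ _ h0.le]
  rw [lintegral_mul_const' _ _ (ENNReal.rpow_ne_top_of_nonneg h0.le hC.ne),
    ENNReal.mul_rpow_of_nonneg _ _ (by positivity)]
  exact ENNReal.mul_lt_top hg (ENNReal.rpow_lt_top_of_nonneg (by positivity)
    (ENNReal.rpow_ne_top_of_nonneg h0.le hC.ne))

theorem aux_factor_lt {α : Type} [MeasurableSpace α] (p : ℝ≥0∞) (μ : Measure α)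
    (hμ : μ Set.univ < ∞) : (μ Set.univ) ^ (1 / p.toReal) < ∞ :=
  ENNReal.rpow_lt_top_of_nonneg (by positivity) hμ.ne

theorem aux_mixed_const : ∀ (d : ℕ) (α : Fin d → Type) [inst : ∀ i, MeasurableSpace (α i)]
    (μ : ∀ i, Measure (α i)) (p : Fin d → ℝ≥0∞) (_ : ∀ i, 0 < p i) (_ : ∀ i, μ i ≠ 0)
    (_ : ∀ i, μ i Set.univ < ∞) (c : ℝ≥0∞) (_ : c < ∞),
    mixedNormE μ p (fun _ => c) < ∞ := by
  intro d
  induction d with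
  | zero => intro α _ μ p _ _ _ c hc; simpa [mixedNormE] using hc
  | succ d ih =>
    intro α _ μ p hp h0 hf c hc
    simp only [mixedNormE]
    refine ih _ _ _ (fun i => hp _) (fun i => h0 _) (fun i => hf _) _ ?_
    rw [aux_const _ (hp 0) _ (h0 0)]
    exact ENNReal.mul_lt_top hc (aux_factor_lt _ _ (hf 0))

theorem aux_mixed : ∀ (d : ℕ) (α : Fin d → Type) [inst : ∀ i, MeasurableSpace (α i)]
    (μ : ∀ i, Measure (α i)) (p : Fin d → ℝ≥0∞) (_ : ∀ i, 0 < p i) (_ : ∀ i, μ i ≠ 0)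
    (_ : ∀ i, μ i Set.univ < ∞) (k : Fin d) (_ : p k ≠ ∞) (g : α k → ℝ≥0∞)
    (_ : lpNorm1 (p k) (μ k) g < ∞),
    mixedNormE μ p (fun x => g (x k)) < ∞ := by
  intro d
  induction d with
  | zero => intro α _ μ p _ _ _ k; exact k.elim0
  | succ d ih =>
    intro α _ μ p hp h0 hf k hk g hg
    simp only [mixedNormE]
    cases k using Fin.cases with
    | zero =>
      simp only [Fin.cons_zero]
      exact aux_mixed_const _ _ _ _ (fun i => hp _) (fun i => h0 _) (fun i => hf _) _ hg
    | succ j =>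
      simp only [Fin.cons_succ, aux_const _ (hp 0) _ (h0 0)]
      exact ih _ (fun i => μ i.succ) _ (fun i => hp _) (fun i => h0 _) (fun i => hf _) j hk
        (fun t => g t * (μ 0) Set.univ ^ (1 / (p 0).toReal))
        (aux_mul _ (hp _) hk _ _ hg _ (aux_factor_lt _ _ (hf 0)))

theorem aux_pow (a r : ℝ) (hr : 0 < r) (S : Set ℝ) (hS : Set.Ioc (0 : ℝ) 1 ⊆ S) :
    ∫⁻ t in S, (ENNReal.ofReal |(Set.Ioc (0 : ℝ) 1).indicator (fun t => t ^ a) t|) ^ r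
      = ∫⁻ t in Set.Ioc (0 : ℝ) 1, ENNReal.ofReal (t ^ (a * r)) := by
  have : (fun t : ℝ => (ENNReal.ofReal |(Set.Ioc (0 : ℝ) 1).indicator (fun t => t ^ a) t|) ^ r)
      = (Set.Ioc (0 : ℝ) 1).indicator (fun t => ENNReal.ofReal (t ^ (a * r))) := by
    funext t
    by_cases h : t ∈ Set.Ioc (0 : ℝ) 1
    · have ht : 0 < t := h.1
      rw [Set.indicator_of_mem h, Set.indicator_of_mem h, abs_of_pos (by positivity),
        ENNReal.ofReal_rpow_of_nonneg (by positivity) hr.le, Real.rpow_mul ht.le]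
    · rw [Set.indicator_of_notMem h, Set.indicator_of_notMem h]
      simp [hr]
  rw [this, lintegral_indicator measurableSet_Ioc, Measure.restrict_restrict measurableSet_Ioc,
    Set.inter_eq_left.mpr hS]

theorem aux_fin (r : ℝ) (hr : -1 < r) :
    ∫⁻ t in Set.Ioc (0 : ℝ) 1, ENNReal.ofReal (t ^ r) < ∞ := by
  have h := (intervalIntegrable_iff_integrableOn_Ioc_of_le zero_le_one).1
    (intervalIntegral.intervalIntegrable_rpow' (a := 0) (b := 1) hr)
  exact Integrable.lintegral_lt_top h

theorem aux_inf : ∫⁻ t in Set.Ioc (0 : ℝ) 1, ENNReal.ofReal (t ^ (-1 : ℝ)) = ∞ := by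
  by_contra hne
  have h : ¬ IntervalIntegrable (fun x : ℝ => x⁻¹) volume 0 1 := by
    rw [intervalIntegrable_inv_iff]; simp
  apply h
  rw [intervalIntegrable_iff_integrableOn_Ioc_of_le zero_le_one]
  refine ⟨by fun_prop, ?_⟩
  rw [hasFiniteIntegral_iff_norm]
  refine lt_of_le_of_lt (le_of_eq ?_) (lt_top_iff_ne_top.2 hne)
  refine setLIntegral_congr_fun measurableSet_Ioc fun t ht => ?_
  have : 0 < t := ht.1
  simp only [Real.rpow_neg_one, Real.norm_eq_abs]
  rw [abs_of_pos (by positivity)]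

/-- If `Ω = Ω₁ × ⋯ × Ω_d` with each `Ω_i ⊆ ℝ` measurable of finite measure
containing `(0,1]`, and `0 < min{p₁,…,p_d} < ∞`, then for every `ε > 0` the mixed Lebesgue
space `L_{p⃗}(Ω)` is not embedded into `L_{min{p₁,…,p_d}+ε}(Ω)`. -/
theorem statement0 (d : ℕ) (hd : 0 < d) (Ω : Fin d → Set ℝ)
    (hΩmeas : ∀ i, MeasurableSet (Ω i)) (hΩfin : ∀ i, volume (Ω i) < ∞)
    (hΩsub : ∀ i, Set.Ioc (0 : ℝ) 1 ⊆ Ω i)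
    (p : Fin d → ℝ≥0∞) (hp : ∀ i, 0 < p i)
    (hminpos : 0 < ⨅ i, p i) (hminfin : ⨅ i, p i < ∞)
    (ε : ℝ) (hε : 0 < ε) :
    ∃ f : (Fin d → ℝ) → ℝ, Measurable f ∧
      mixedNorm (fun i => volume.restrict (Ω i)) p f < ∞ ∧
      eLpNorm f ((⨅ i, p i) + ENNReal.ofReal ε)
        (Measure.pi fun i => volume.restrict (Ω i)) = ∞ := by
  have : Nonempty (Fin d) := ⟨⟨0, hd⟩⟩
  obtain ⟨k, hk⟩ := exists_eq_ciInf_of_finite (f := p)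
  rw [← hk] at hminfin ⊢
  set μ : Fin d → Measure ℝ := fun i => volume.restrict (Ω i) with hμ
  have hfin : ∀ i, μ i Set.univ < ∞ := fun i => by simpa [hμ] using hΩfin i
  have hne : ∀ i, μ i ≠ 0 := fun i h => by
    have h1 : volume (Ω i) = 0 := by simpa [hμ] using h
    have h2 := measure_mono_null (hΩsub i) h1
    simp at h2
  have : ∀ i, IsFiniteMeasure (μ i) := fun i => ⟨hfin i⟩
  have hm : 0 < (p k).toReal := ENNReal.toReal_pos (hp k).ne' hminfin.ne
  set m := (p k).toReal with hmdef
  set a : ℝ := -(1 / (m + ε)) with ha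
  set g : ℝ → ℝ := (Set.Ioc (0 : ℝ) 1).indicator (fun t => t ^ a) with hg
  have hgm : Measurable g := Measurable.indicator (by fun_prop) measurableSet_Ioc
  refine ⟨fun x => g (x k), hgm.comp (measurable_pi_apply k), ?_, ?_⟩
  · unfold mixedNorm
    refine aux_mixed d (fun _ => ℝ) μ p hp hne hfin k hminfin.ne
      (fun t => ENNReal.ofReal |g t|) ?_
    unfold lpNorm1
    rw [if_neg hminfin.ne]
    refine ENNReal.rpow_lt_top_of_nonneg (by positivity) (ne_of_lt ?_)
    rw [hg, hμ, aux_pow a _ hm _ (hΩsub k)]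
    apply aux_fin
    rw [ha, neg_mul, neg_lt_neg_iff, one_div_mul_eq_div, div_lt_one (by positivity)]
    linarith
  · have hq : (p k + ENNReal.ofReal ε).toReal = m + ε := by
      rw [ENNReal.toReal_add hminfin.ne ENNReal.ofReal_ne_top, ENNReal.toReal_ofReal hε.le]
    have hqtop : p k + ENNReal.ofReal ε ≠ ∞ := by simp [hminfin.ne]
    have hq0 : p k + ENNReal.ofReal ε ≠ 0 := by simp [(hp k).ne']
    have h1 := eLpNorm_map_measure (p := p k + ENNReal.ofReal ε) (f := Function.eval k)
      (μ := Measure.pi μ) (g := g) hgm.aestronglyMeasurable (measurable_pi_apply k).aemeasurable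
    have h2 : eLpNorm g (p k + ENNReal.ofReal ε) (μ k) = ∞ := by
      rw [eLpNorm_eq_lintegral_rpow_enorm_toReal hq0 hqtop, hq]
      simp_rw [Real.enorm_eq_ofReal_abs]
      rw [hg, hμ, aux_pow a _ (by positivity) _ (hΩsub k)]
      have : a * (m + ε) = -1 := by rw [ha]; field_simp
      rw [this, aux_inf]
      exact ENNReal.top_rpow_of_pos (by positivity)
    rw [Measure.pi_map_eval, eLpNorm_smul_measure_of_ne_top hqtop, h2] at h1
    refine h1.symm.trans ?_
    rw [smul_eq_mul]
    refine ENNReal.mul_top (ne_of_gt (ENNReal.rpow_pos ?_ ?_))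
    · refine pos_iff_ne_zero.2 (Finset.prod_ne_zero_iff.2 fun i _ => ?_)
      simpa using hne i
    · exact (ENNReal.prod_lt_top fun i _ => hfin i).ne
end

section
/- Let Ω = Ω₁ × ⋯ × Ω_d, where each Ω_i ⊆ ℝ is Lebesgue-measurable of finite Lebesgue measure with (0,1] ⊆ Ω_i, equipped with Lebesgue measure, and let p⃗ = (p₁,…,p_d) with 0 < p_i ≤ ∞ and 0 < min{p₁,…,p_d} < ∞. Then the additional growth-envelope index of L_{p⃗}(Ω) (taken with respect to the envelope t^{-1/min{p₁,…,p_d}}) equals min{p₁,…,p_d}: the Hardy-type inequality ( ∫_0^ε ( t^{1/min{p₁,…,p_d}} f^*(t) )^v dt/t )^{1/v} ≤ c ‖f‖_{p⃗} (for some ε, c > 0 and all f ∈ L_{p⃗}(Ω)) holds for v = min{p₁,…,p_d} and fails for every 0 < v < min{p₁,…,p_d}. -/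
open MeasureTheory ENNReal Set Filter

lemma lpNorm1_mono {α : Type} [MeasurableSpace α] (p : ℝ≥0∞) (μ : Measure α)
    {g h : α → ℝ≥0∞} (hgh : ∀ x, g x ≤ h x) : lpNorm1 p μ g ≤ lpNorm1 p μ h := by
  unfold lpNorm1
  split_ifs with hp
  · exact essSup_mono_ae (Eventually.of_forall hgh)
  · gcongr with x
    exact hgh x

lemma lpNorm1_const_mul {α : Type} [MeasurableSpace α] (p : ℝ≥0∞) (hp0 : 0 < p) (μ : Measure α)
    (k : ℝ≥0∞) (hk : k ≠ ∞) (g : α → ℝ≥0∞) :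
    lpNorm1 p μ (fun x => k * g x) ≤ k * lpNorm1 p μ g := by
  unfold lpNorm1
  split_ifs with hp
  · exact ENNReal.essSup_const_mul.le
  · have hr : 0 < p.toReal := ENNReal.toReal_pos hp0.ne' hp
    simp_rw [ENNReal.mul_rpow_of_nonneg _ _ hr.le]
    rw [lintegral_const_mul' _ _ (ENNReal.rpow_ne_top_of_nonneg hr.le hk),
      ENNReal.mul_rpow_of_nonneg _ _ (by positivity), ← ENNReal.rpow_mul,
      mul_one_div_cancel hr.ne', ENNReal.rpow_one]

lemma mixedNormE_mono {d : ℕ} (μ : Fin d → Measure ℝ) (p : Fin d → ℝ≥0∞)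
    {g h : (Fin d → ℝ) → ℝ≥0∞} (hgh : ∀ x, g x ≤ h x) :
    mixedNormE (α := fun _ => ℝ) μ p g ≤ mixedNormE (α := fun _ => ℝ) μ p h := by
  induction d with
  | zero => exact hgh _
  | succ d ih => exact ih _ _ fun y => lpNorm1_mono _ _ fun x => hgh _

lemma mixedNormE_const_mul {d : ℕ} (μ : Fin d → Measure ℝ) (p : Fin d → ℝ≥0∞)
    (hp : ∀ i, 0 < p i) (k : ℝ≥0∞) (hk : k ≠ ∞) (g : (Fin d → ℝ) → ℝ≥0∞) :
    mixedNormE (α := fun _ => ℝ) μ p (fun x => k * g x) ≤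
      k * mixedNormE (α := fun _ => ℝ) μ p g := by
  induction d with
  | zero => exact le_rfl
  | succ d ih =>
    refine le_trans ?_ (ih (fun i => μ i.succ) (fun i => p i.succ) (fun i => hp _) _)
    exact mixedNormE_mono _ _ fun y => lpNorm1_const_mul _ (hp 0) _ _ hk _

lemma lpNorm1_const {α : Type} [MeasurableSpace α] (p : ℝ≥0∞) (hp0 : 0 < p) (μ : Measure α)
    [IsFiniteMeasure μ] : ∃ k : ℝ≥0∞, k ≠ ∞ ∧ ∀ c : ℝ≥0∞, lpNorm1 p μ (fun _ => c) ≤ k * c := by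
  by_cases hp : p = ∞
  · refine ⟨1, by simp, fun c => ?_⟩
    rw [lpNorm1, if_pos hp, one_mul]
    exact essSup_le_of_ae_le _ (Eventually.of_forall fun _ => le_rfl)
  · have hr : 0 < p.toReal := ENNReal.toReal_pos hp0.ne' hp
    refine ⟨μ univ ^ (1 / p.toReal),
      ENNReal.rpow_ne_top_of_nonneg (by positivity) (measure_ne_top _ _), fun c => ?_⟩
    rw [lpNorm1, if_neg hp, lintegral_const, ENNReal.mul_rpow_of_nonneg _ _ (by positivity),
      ← ENNReal.rpow_mul, mul_one_div_cancel hr.ne', ENNReal.rpow_one, mul_comm]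

lemma mixedNormE_const {d : ℕ} (μ : Fin d → Measure ℝ) [∀ i, IsFiniteMeasure (μ i)]
    (p : Fin d → ℝ≥0∞) (hp : ∀ i, 0 < p i) :
    ∃ k : ℝ≥0∞, k ≠ ∞ ∧ ∀ c : ℝ≥0∞,
      mixedNormE (α := fun _ => ℝ) μ p (fun _ => c) ≤ k * c := by
  induction d with
  | zero => exact ⟨1, by simp, fun c => by rw [one_mul]; exact le_rfl⟩
  | succ d ih =>
    obtain ⟨k, hk, h⟩ := ih (fun i => μ i.succ) (fun i => p i.succ) (fun i => hp _)
    obtain ⟨k', hk', h'⟩ := lpNorm1_const (p 0) (hp 0) (μ 0)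
    refine ⟨k * k', ENNReal.mul_ne_top hk hk', fun c => ?_⟩
    refine (h _).trans ?_
    rw [mul_assoc]
    exact mul_le_mul_right (h' c) k

lemma mixedNormE_coord {d : ℕ} (μ : Fin d → Measure ℝ) [∀ i, IsFiniteMeasure (μ i)]
    (p : Fin d → ℝ≥0∞) (hp : ∀ i, 0 < p i) (i₀ : Fin d) :
    ∃ k : ℝ≥0∞, k ≠ ∞ ∧ ∀ G : ℝ → ℝ≥0∞,
      mixedNormE (α := fun _ => ℝ) μ p (fun x => G (x i₀)) ≤ k * lpNorm1 (p i₀) (μ i₀) G := by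
  induction d with
  | zero => exact i₀.elim0
  | succ d ih =>
    refine Fin.cases ?_ (fun j => ?_) i₀
    · obtain ⟨k, hk, h⟩ := mixedNormE_const (fun i => μ i.succ) (fun i => p i.succ) (fun i => hp _)
      exact ⟨k, hk, fun G => h _⟩
    · obtain ⟨k, hk, h⟩ := ih (fun i => μ i.succ) (fun i => p i.succ) (fun i => hp _) j
      obtain ⟨k', hk', h'⟩ := lpNorm1_const (p 0) (hp 0) (μ 0)
      refine ⟨k' * k, ENNReal.mul_ne_top hk' hk, fun G => ?_⟩
      rw [mul_assoc]
      refine le_trans ?_ (mul_le_mul_right (h G) k')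
      refine le_trans ?_ (mixedNormE_const_mul _ _ (fun i => hp _) _ hk' _)
      exact mixedNormE_mono _ _ fun y => h' _

lemma lpNorm1_compare {α : Type} [MeasurableSpace α] (m p : ℝ≥0∞) (hm0 : 0 < m) (hm : m ≠ ∞)
    (hmp : m ≤ p) (μ : Measure α) [IsFiniteMeasure μ] :
    ∃ k : ℝ≥0∞, k ≠ ∞ ∧ ∀ g : α → ℝ≥0∞, Measurable g →
      (∫⁻ x, g x ^ m.toReal ∂μ) ^ (1 / m.toReal) ≤ k * lpNorm1 p μ g := by
  have hr : 0 < m.toReal := ENNReal.toReal_pos hm0.ne' hm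
  by_cases hp : p = ∞
  · refine ⟨μ univ ^ (1 / m.toReal),
      ENNReal.rpow_ne_top_of_nonneg (by positivity) (measure_ne_top _ _), fun g hg => ?_⟩
    rw [lpNorm1, if_pos hp]
    have : ∫⁻ x, g x ^ m.toReal ∂μ ≤ ∫⁻ x, essSup g μ ^ m.toReal ∂μ := by
      refine lintegral_mono_ae ?_
      filter_upwards [ENNReal.ae_le_essSup g] with x hx
      gcongr
    refine (ENNReal.rpow_le_rpow this (by positivity)).trans ?_
    rw [lintegral_const, ENNReal.mul_rpow_of_nonneg _ _ (by positivity),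
      ← ENNReal.rpow_mul, mul_one_div_cancel hr.ne', ENNReal.rpow_one, mul_comm]
  · have hmp' := ENNReal.toReal_mono hp hmp
    refine ⟨μ univ ^ (1 / m.toReal - 1 / p.toReal),
      ENNReal.rpow_ne_top_of_nonneg ?_ (measure_ne_top _ _), fun g hg => ?_⟩
    · exact sub_nonneg.2 (one_div_le_one_div_of_le hr hmp')
    · rw [lpNorm1, if_neg hp, mul_comm]
      exact eLpNorm'_le_eLpNorm'_mul_rpow_measure_univ (f := g) hr hmp'
        hg.aestronglyMeasurable

lemma measurable_fin_cons {d : ℕ} :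
    Measurable (fun z : ℝ × (Fin d → ℝ) => (Fin.cons z.1 z.2 : Fin (d + 1) → ℝ)) := by
  refine measurable_pi_iff.2 fun i => ?_
  refine Fin.cases ?_ (fun j => ?_) i
  · simpa using measurable_fst
  · simp only [Fin.cons_succ]
    fun_prop

lemma lintegral_pi_succ {d : ℕ} (μ : Fin (d + 1) → Measure ℝ) [∀ i, IsFiniteMeasure (μ i)]
    (f : (Fin (d + 1) → ℝ) → ℝ≥0∞) (hf : Measurable f) :
    ∫⁻ x, f x ∂(Measure.pi μ) =
      ∫⁻ y, ∫⁻ x, f (Fin.cons x y) ∂(μ 0) ∂(Measure.pi fun i => μ i.succ) := by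
  have h := (measurePreserving_piFinSuccAbove μ 0).symm
  rw [← h.lintegral_comp hf]
  have e : ∀ z : ℝ × (Fin d → ℝ), f ((MeasurableEquiv.piFinSuccAbove (fun _ => ℝ) 0).symm z)
      = f (Fin.cons z.1 z.2) := by
    intro z
    congr 1
    exact Fin.insertNth_zero' _ _
  rw [lintegral_congr e]
  exact lintegral_prod_symm _ (hf.comp measurable_fin_cons).aemeasurable

lemma mixedNormE_ge {d : ℕ} (μ : Fin d → Measure ℝ) [∀ i, IsFiniteMeasure (μ i)]
    (p : Fin d → ℝ≥0∞) (m : ℝ≥0∞) (hm0 : 0 < m) (hm : m ≠ ∞) (hp : ∀ i, m ≤ p i) :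
    ∃ k : ℝ≥0∞, k ≠ ∞ ∧ ∀ f : (Fin d → ℝ) → ℝ≥0∞, Measurable f →
      (∫⁻ x, f x ^ m.toReal ∂(Measure.pi μ)) ^ (1 / m.toReal) ≤
        k * mixedNormE (α := fun _ => ℝ) μ p f := by
  have hr : 0 < m.toReal := ENNReal.toReal_pos hm0.ne' hm
  induction d with
  | zero =>
    refine ⟨1, by simp, fun f hf => ?_⟩
    rw [Measure.pi_of_empty, lintegral_dirac, ← ENNReal.rpow_mul, mul_one_div_cancel hr.ne',
      ENNReal.rpow_one, one_mul]
    rw [mixedNormE]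
    exact le_of_eq (congrArg f (Subsingleton.elim _ _))
  | succ d ih =>
    obtain ⟨k, hk, h⟩ := ih (fun i => μ i.succ) (fun i => p i.succ) (fun i => hp _)
    obtain ⟨k', hk', h'⟩ := lpNorm1_compare m (p 0) hm0 hm (hp 0) (μ 0)
    refine ⟨k * k', ENNReal.mul_ne_top hk hk', fun f hf => ?_⟩
    rw [lintegral_pi_succ μ _ (hf.pow_const _)]
    have hfc : Measurable fun z : (Fin d → ℝ) × ℝ =>
        f (Fin.cons z.2 z.1 : Fin (d + 1) → ℝ) :=
      hf.comp (measurable_fin_cons.comp measurable_swap)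
    have hg : Measurable fun y : Fin d → ℝ =>
        (∫⁻ x, f (Fin.cons x y : Fin (d + 1) → ℝ) ^ m.toReal ∂(μ 0)) ^ (1 / m.toReal) :=
      (Measurable.lintegral_prod_right' (hfc.pow_const m.toReal)).pow_const _
    have h1 := h _ hg
    simp_rw [← ENNReal.rpow_mul, one_div_mul_cancel hr.ne', ENNReal.rpow_one] at h1
    refine h1.trans ?_
    rw [mul_assoc]
    refine mul_le_mul_right ?_ k
    refine le_trans ?_ (mixedNormE_const_mul (fun i => μ i.succ) (fun i => p i.succ) (fun i => hm0.trans_le (hp _)) k' hk' _)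
    refine mixedNormE_mono _ _ fun y => h' (fun x => f (Fin.cons x y : Fin (d + 1) → ℝ)) ?_
    exact hfc.comp (measurable_const.prodMk measurable_id)

lemma lintegral_layer {α : Type} [MeasurableSpace α] (μ : Measure α) [SFinite μ]
    (g : α → ℝ≥0∞) (hg : Measurable g) :
    ∫⁻ x, g x ∂μ = ∫⁻ s in Ioi (0 : ℝ), μ {x | ENNReal.ofReal s < g x} := by
  have hS : MeasurableSet {z : α × ℝ | ENNReal.ofReal z.2 < g z.1} :=
    measurableSet_lt (by fun_prop) (by fun_prop)
  have h1 := Measure.prod_apply (μ := μ) (ν := volume.restrict (Ioi (0 : ℝ))) hS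
  have h2 := Measure.prod_apply_symm (μ := μ) (ν := volume.restrict (Ioi (0 : ℝ))) hS
  rw [h1] at h2
  refine Eq.trans ?_ h2
  refine lintegral_congr fun x => ?_
  rw [Measure.restrict_apply (measurable_prodMk_left hS)]
  by_cases hx : g x = ∞
  · rw [hx]
    have : Prod.mk x ⁻¹' {z : α × ℝ | ENNReal.ofReal z.2 < g z.1} ∩ Ioi 0 = Ioi 0 := by
      ext s; simp [hx]
    rw [this, Real.volume_Ioi]
  · have : Prod.mk x ⁻¹' {z : α × ℝ | ENNReal.ofReal z.2 < g z.1} ∩ Ioi 0 =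
        Ioo 0 (g x).toReal := by
      ext s
      simp only [mem_inter_iff, mem_preimage, mem_ofPred_eq, mem_Ioi, mem_Ioo]
      rw [and_comm]
      refine and_congr_right fun hs => ?_
      rw [ENNReal.ofReal_lt_iff_lt_toReal hs.le hx]
    rw [this, Real.volume_Ioo, sub_zero, ENNReal.ofReal_toReal hx]

lemma rearr_antitone {α : Type} [MeasurableSpace α] (μ : Measure α) (f : α → ℝ) :
    Antitone (rearr μ f) := by
  intro s t hst
  exact sInf_le_sInf fun a ha => le_trans (ha : _ ≤ _) (ENNReal.ofReal_le_ofReal hst)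

lemma lintegral_rearr_le {α : Type} [MeasurableSpace α] (μ : Measure α) [SFinite μ] (f : α → ℝ)
    (hf : Measurable f) (m : ℝ) (hm : 0 < m) (ε : ℝ) :
    ∫⁻ t in Ioo 0 ε, rearr μ f t ^ m ≤ ∫⁻ x, ENNReal.ofReal |f x| ^ m ∂μ := by
  rw [lintegral_layer _ _ ((rearr_antitone μ f).measurable.pow_const m),
    lintegral_layer μ _ (by fun_prop)]
  refine lintegral_mono fun s => ?_
  have key : ∀ a b : ℝ≥0∞, a < b ^ m ↔ a ^ m⁻¹ < b := fun a b =>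
    (ENNReal.rpow_inv_lt_iff hm).symm
  simp_rw [key]
  set σ := ENNReal.ofReal s ^ m⁻¹
  by_cases hM : μ {x | σ < ENNReal.ofReal |f x|} = ∞
  · rw [hM]; exact le_top
  · have hsub : {t | σ < rearr μ f t} ∩ Ioo 0 ε ⊆
        Ioo 0 (μ {x | σ < ENNReal.ofReal |f x|}).toReal := by
      rintro t ⟨ht, ht0, -⟩
      refine ⟨ht0, ?_⟩
      rw [← ENNReal.ofReal_lt_iff_lt_toReal ht0.le hM]
      by_contra hcon
      have h3 : rearr μ f t ≤ σ := sInf_le (not_lt.1 hcon)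
      exact absurd h3 (not_le.2 ht)
    rw [Measure.restrict_apply (measurableSet_lt measurable_const
      (rearr_antitone μ f).measurable)]
    refine (measure_mono hsub).trans ?_
    rw [Real.volume_Ioo, sub_zero, ENNReal.ofReal_toReal hM]

lemma lintegral_rpow_Ioo (r b : ℝ) (hr : -1 < r) (hb : 0 < b) :
    ∫⁻ t in Ioo 0 b, ENNReal.ofReal (t ^ r) = ENNReal.ofReal (b ^ (r + 1) / (r + 1)) := by
  rw [← ofReal_integral_eq_lintegral_ofReal
    ((intervalIntegral.integrableOn_Ioo_rpow_iff hb).2 hr)]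
  · rw [← integral_Ioc_eq_integral_Ioo, ← intervalIntegral.integral_of_le hb.le,
      integral_rpow (Or.inl hr), Real.zero_rpow (by linarith), sub_zero]
  · exact ae_restrict_of_forall_mem measurableSet_Ioo fun t ht => Real.rpow_nonneg ht.1.le _

/-- The extremal one-variable function. -/
noncomputable def powFn (a : ℝ) : ℝ → ℝ := (Ioc (0 : ℝ) 1).indicator fun t => t ^ (-a)

lemma measurable_powFn (a : ℝ) : Measurable (powFn a) :=
  Measurable.indicator (by fun_prop) measurableSet_Ioc

lemma lpNorm1_powFn (m : ℝ≥0∞) (hm0 : 0 < m) (hm : m ≠ ∞) (Ω : Set ℝ) (η : ℝ) (hη : 0 < η) :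
    lpNorm1 m (volume.restrict Ω) (fun t => ENNReal.ofReal |powFn (1 / m.toReal - η) t|) ≤
      ENNReal.ofReal ((1 / (m.toReal * η)) ^ (1 / m.toReal)) := by
  have hr : 0 < m.toReal := ENNReal.toReal_pos hm0.ne' hm
  set M := m.toReal
  rw [lpNorm1, if_neg hm, ← ENNReal.ofReal_rpow_of_nonneg (by positivity) (by positivity)]
  refine ENNReal.rpow_le_rpow ?_ (by positivity)
  calc ∫⁻ x in Ω, ENNReal.ofReal |powFn (1 / M - η) x| ^ M
      ≤ ∫⁻ x, ENNReal.ofReal |powFn (1 / M - η) x| ^ M := setLIntegral_le_lintegral _ _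
    _ = ∫⁻ x, (Ioc (0 : ℝ) 1).indicator (fun t => ENNReal.ofReal (t ^ (M * η - 1))) x := by
      refine lintegral_congr fun x => ?_
      by_cases hx : x ∈ Ioc (0 : ℝ) 1
      · rw [powFn, indicator_of_mem hx, indicator_of_mem hx, abs_of_nonneg
          (Real.rpow_nonneg hx.1.le _), ENNReal.ofReal_rpow_of_nonneg
          (Real.rpow_nonneg hx.1.le _) hr.le, ← Real.rpow_mul hx.1.le]
        congr 2
        field_simp
        ring
      · rw [powFn, indicator_of_notMem hx, indicator_of_notMem hx]
        simp [hr]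
    _ = ∫⁻ x in Ioo (0 : ℝ) 1, ENNReal.ofReal (x ^ (M * η - 1)) := by
      rw [lintegral_indicator measurableSet_Ioc, restrict_Ioo_eq_restrict_Ioc]
    _ = ENNReal.ofReal (1 / (M * η)) := by
      rw [lintegral_rpow_Ioo _ _ (by nlinarith [mul_pos hr hη]) one_pos]
      simp
    _ ≤ _ := le_rfl

lemma rearr_powFn {d : ℕ} (Ω : Fin d → Set ℝ) (hΩfin : ∀ i, volume (Ω i) < ∞)
    (hΩsub : ∀ i, Set.Ioc (0 : ℝ) 1 ⊆ Ω i) (i₀ : Fin d) (a : ℝ) (ha : 0 ≤ a) (t : ℝ)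
    (ht : 0 < t) (ht1 : t ≤ 1 / 2) :
    ENNReal.ofReal ((2 * t) ^ (-a)) ≤
      rearr (Measure.pi fun i => volume.restrict (Ω i)) (fun x => powFn a (x i₀)) t := by
  have : ∀ i, IsFiniteMeasure (volume.restrict (Ω i)) := fun i =>
    ⟨by simpa using hΩfin i⟩
  refine le_sInf fun s hs => ?_
  by_contra! hcon
  have hs' : (Measure.pi fun i => volume.restrict (Ω i))
    {x | s < ENNReal.ofReal |powFn a (x i₀)|} ≤ ENNReal.ofReal t := hs
  have hsub : Set.pi univ (fun i => Ioc (0 : ℝ) (if i = i₀ then 2 * t else 1)) ⊆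
      {x | s < ENNReal.ofReal |powFn a (x i₀)|} := by
    intro x hx
    have h0 := hx i₀ (mem_univ _)
    simp only [if_true] at h0
    refine hcon.trans_le (ENNReal.ofReal_le_ofReal ?_)
    rw [powFn, indicator_of_mem (show x i₀ ∈ Ioc (0 : ℝ) 1 from ⟨h0.1, by linarith [h0.2]⟩)]
    exact (Real.rpow_le_rpow_of_nonpos h0.1 h0.2 (by linarith)).trans (le_abs_self _)
  have h1 := (measure_mono hsub).trans hs'
  rw [Measure.pi_pi] at h1
  have h2 : ∀ i, (volume.restrict (Ω i)) (Ioc (0 : ℝ) (if i = i₀ then 2 * t else 1)) =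
      if i = i₀ then ENNReal.ofReal (2 * t) else 1 := by
    intro i
    rw [Measure.restrict_apply measurableSet_Ioc, inter_eq_left.2, Real.volume_Ioc]
    · split_ifs <;> simp
    · refine (Ioc_subset_Ioc_right ?_).trans (hΩsub i)
      split_ifs <;> linarith
  simp_rw [h2] at h1
  rw [Finset.prod_ite_eq' Finset.univ i₀, if_pos (Finset.mem_univ _),
    ENNReal.ofReal_le_ofReal_iff ht.le] at h1
  linarith

lemma hardy_powFn {d : ℕ} (Ω : Fin d → Set ℝ) (hΩfin : ∀ i, volume (Ω i) < ∞)
    (hΩsub : ∀ i, Set.Ioc (0 : ℝ) 1 ⊆ Ω i) (i₀ : Fin d) (M : ℝ) (hM : 0 < M)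
    (η : ℝ) (hη : 0 < η) (hη1 : η ≤ 1) (hηM : η ≤ 1 / M) (v : ℝ≥0∞) (hv0 : 0 < v) (hv : v ≠ ∞)
    (ε δ : ℝ) (hδ : 0 < δ) (hδε : δ ≤ ε) (hδ1 : δ ≤ 1 / 2) :
    ENNReal.ofReal ((2 ^ (-(1 / M)) * δ) * (1 / (v.toReal * η)) ^ (1 / v.toReal)) ≤
      hardy (Measure.pi fun i => volume.restrict (Ω i)) (1 / M) v ε
        (fun x => powFn (1 / M - η) (x i₀)) := by
  have hw : 0 < v.toReal := ENNReal.toReal_pos hv0.ne' hv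
  set w := v.toReal
  set c : ℝ := 2 ^ (-(1 / M)) with hc
  have hc0 : 0 < c := by positivity
  rw [hardy, if_neg hv]
  have e1 : (c * δ) * (1 / (w * η)) ^ (1 / w) = (c ^ w * (δ ^ w / (w * η))) ^ (1 / w) := by
    rw [Real.mul_rpow (by positivity) (by positivity),
      Real.div_rpow (x := δ ^ w) (by positivity) (by positivity),
      ← Real.rpow_mul hc0.le, ← Real.rpow_mul hδ.le, mul_one_div_cancel hw.ne', Real.rpow_one,
      Real.rpow_one, Real.div_rpow (by positivity) (by positivity), Real.one_rpow]
    ring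
  rw [e1, ← ENNReal.ofReal_rpow_of_nonneg (by positivity) (by positivity)]
  refine ENNReal.rpow_le_rpow ?_ (by positivity)
  calc ENNReal.ofReal (c ^ w * (δ ^ w / (w * η)))
      ≤ ENNReal.ofReal (c ^ w * (δ ^ (w * η) / (w * η))) := by
        refine ENNReal.ofReal_le_ofReal ?_
        gcongr ?_ * (?_ / ?_)
        exact Real.rpow_le_rpow_of_exponent_ge hδ (by linarith) (by nlinarith)
    _ = ENNReal.ofReal (c ^ w) * ∫⁻ t in Ioo 0 δ, ENNReal.ofReal (t ^ (w * η - 1)) := by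
        rw [lintegral_rpow_Ioo _ _ (by nlinarith [mul_pos hw hη]) hδ, sub_add_cancel,
          ENNReal.ofReal_mul (by positivity)]
    _ = ∫⁻ t in Ioo 0 δ, ENNReal.ofReal (c ^ w) * ENNReal.ofReal (t ^ (w * η - 1)) := by
        rw [lintegral_const_mul' _ _ ENNReal.ofReal_ne_top]
    _ ≤ ∫⁻ t in Ioo 0 δ, (ENNReal.ofReal t ^ (1 / M) *
          rearr (Measure.pi fun i => volume.restrict (Ω i))
            (fun x => powFn (1 / M - η) (x i₀)) t) ^ w / ENNReal.ofReal t := by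
        refine setLIntegral_mono' measurableSet_Ioo fun t ht => ?_
        have ht0 := ht.1
        have hR := rearr_powFn Ω hΩfin hΩsub i₀ (1 / M - η) (by linarith) t ht0
          (by linarith [ht.2])
        rw [ENNReal.le_div_iff_mul_le (Or.inl (by simpa using ht0)) (Or.inl ENNReal.ofReal_ne_top)]
        refine le_trans ?_ (ENNReal.rpow_le_rpow (mul_le_mul_right hR _) hw.le)
        rw [ENNReal.ofReal_rpow_of_nonneg ht0.le (by positivity),
          ← ENNReal.ofReal_mul (by positivity), ← ENNReal.ofReal_mul (by positivity),
          ← ENNReal.ofReal_mul (by positivity),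
          ENNReal.ofReal_rpow_of_nonneg (by positivity) hw.le]
        refine ENNReal.ofReal_le_ofReal ?_
        have e2 : c ^ w * t ^ (w * η - 1) * t = (c * t ^ η) ^ w := by
          rw [Real.mul_rpow hc0.le (by positivity), ← Real.rpow_mul ht0.le, Real.rpow_sub_one ht0.ne',
            mul_comm η w]
          field_simp
        rw [e2]
        refine Real.rpow_le_rpow (by positivity) ?_ hw.le
        rw [Real.mul_rpow (by norm_num) ht0.le, mul_left_comm, ← Real.rpow_add ht0]
        have e3 : 1 / M + -(1 / M - η) = η := by ring
        rw [e3]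
        refine mul_le_mul_of_nonneg_right ?_ (by positivity)
        exact Real.rpow_le_rpow_of_exponent_le (by norm_num) (by linarith)
    _ ≤ _ := lintegral_mono_set (Ioo_subset_Ioo_right hδε)

/-- The additional growth-envelope index of `L_{p⃗}(Ω)` equals
`min{p₁,…,p_d}`: the Hardy-type inequality holds for `v = min{p₁,…,p_d}` and fails for every
`0 < v < min{p₁,…,p_d}`. -/
theorem statement4 (d : ℕ) (hd : 0 < d) (Ω : Fin d → Set ℝ)
    (hΩmeas : ∀ i, MeasurableSet (Ω i)) (hΩfin : ∀ i, volume (Ω i) < ∞)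
    (hΩsub : ∀ i, Set.Ioc (0 : ℝ) 1 ⊆ Ω i)
    (p : Fin d → ℝ≥0∞) (hp : ∀ i, 0 < p i)
    (hminpos : 0 < ⨅ i, p i) (hminfin : ⨅ i, p i < ∞) :
    (∃ ε > (0 : ℝ), ∃ c : ℝ≥0∞, 0 < c ∧ c < ∞ ∧
      ∀ f : (Fin d → ℝ) → ℝ, Measurable f →
        mixedNorm (fun i => volume.restrict (Ω i)) p f < ∞ →
        hardy (Measure.pi fun i => volume.restrict (Ω i)) (1 / (⨅ i, p i).toReal)
            (⨅ i, p i) ε f ≤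
          c * mixedNorm (fun i => volume.restrict (Ω i)) p f) ∧
    (∀ v : ℝ≥0∞, 0 < v → v < ⨅ i, p i →
      ¬ ∃ ε > (0 : ℝ), ∃ c : ℝ≥0∞, c < ∞ ∧
        ∀ f : (Fin d → ℝ) → ℝ, Measurable f →
          mixedNorm (fun i => volume.restrict (Ω i)) p f < ∞ →
          hardy (Measure.pi fun i => volume.restrict (Ω i)) (1 / (⨅ i, p i).toReal) v ε f ≤
            c * mixedNorm (fun i => volume.restrict (Ω i)) p f) := by
  have hfm : ∀ i, IsFiniteMeasure (volume.restrict (Ω i)) := fun i =>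
    ⟨by simpa using hΩfin i⟩
  have hle : ∀ i, ⨅ i, p i ≤ p i := fun i => iInf_le _ i
  have : Nonempty (Fin d) := ⟨⟨0, hd⟩⟩
  obtain ⟨i₀, hi₀⟩ := exists_eq_ciInf_of_finite (f := p)
  generalize hmdef : (⨅ i, p i) = m at *
  have hm : m ≠ ∞ := hminfin.ne
  have hM : 0 < m.toReal := ENNReal.toReal_pos hminpos.ne' hm
  constructor
  · obtain ⟨k, hk, h⟩ := mixedNormE_ge (fun i => volume.restrict (Ω i)) p m hminpos hm hle
    refine ⟨1, one_pos, k + 1, by simp, by simp [lt_top_iff_ne_top, hk], fun f hf _ => ?_⟩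
    have h1 := h (fun x => ENNReal.ofReal |f x|) (by fun_prop)
    refine le_trans ?_ (h1.trans (mul_le_mul_left le_self_add _))
    rw [hardy, if_neg hm]
    refine ENNReal.rpow_le_rpow ?_ (by positivity)
    refine le_trans (le_of_eq ?_) (lintegral_rearr_le _ f hf m.toReal hM 1)
    refine setLIntegral_congr_fun measurableSet_Ioo fun t ht => ?_
    have ht0 : ENNReal.ofReal t ≠ 0 := by simpa using ht.1
    rw [ENNReal.mul_rpow_of_nonneg _ _ hM.le, ← ENNReal.rpow_mul, one_div_mul_cancel hM.ne',
      ENNReal.rpow_one, mul_comm, mul_div_assoc, ENNReal.div_self ht0 ENNReal.ofReal_ne_top, mul_one]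
  · rintro v hv0 hvm ⟨ε, hε, c, hc, H⟩
    have hv : v ≠ ∞ := (hvm.trans hminfin).ne
    have hw : 0 < v.toReal := ENNReal.toReal_pos hv0.ne' hv
    have hwM : v.toReal < m.toReal := (ENNReal.toReal_lt_toReal hv hm).2 hvm
    obtain ⟨k, hk, hK⟩ := mixedNormE_coord (fun i => volume.restrict (Ω i)) p hp i₀
    set δ := min ε (1 / 2) with hδdef
    have hδ : 0 < δ := lt_min hε (by norm_num)
    set M := m.toReal
    set w := v.toReal
    set A : ℝ := 2 ^ (-(1 / M)) * δ with hA
    have hA0 : 0 < A := by positivity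
    have key : ∀ η : ℝ, 0 < η → η ≤ 1 → η ≤ 1 / M →
        A * (1 / (w * η)) ^ (1 / w) ≤ (c * k).toReal * (1 / (M * η)) ^ (1 / M) := by
      intro η hη hη1 hηM
      have h1 := hardy_powFn Ω hΩfin hΩsub i₀ M hM η hη hη1 hηM v hv0 hv ε δ hδ
        (min_le_left _ _) (min_le_right _ _)
      have h2 := hK (fun t => ENNReal.ofReal |powFn (1 / M - η) t|)
      rw [hi₀] at h2
      have h3 : mixedNorm (fun i => volume.restrict (Ω i)) p
          (fun x : Fin d → ℝ => powFn (1 / M - η) (x i₀)) ≤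
          k * ENNReal.ofReal ((1 / (M * η)) ^ (1 / M)) :=
        h2.trans (mul_le_mul_right (lpNorm1_powFn m hminpos hm (Ω i₀) η hη) k)
      have h4 := H (fun x => powFn (1 / M - η) (x i₀))
        ((measurable_powFn _).comp (measurable_pi_apply i₀))
        (h3.trans_lt (ENNReal.mul_lt_top hk.lt_top ENNReal.ofReal_lt_top))
      have h5 := h1.trans (h4.trans (mul_le_mul_right h3 c))
      rw [← mul_assoc] at h5
      have hck : c * k ≠ ∞ := ENNReal.mul_ne_top hc.ne hk
      rw [← ENNReal.ofReal_toReal hck, ← ENNReal.ofReal_mul ENNReal.toReal_nonneg] at h5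
      exact (ENNReal.ofReal_le_ofReal_iff (by positivity)).1 h5
    have hexp : 0 < 1 / w - 1 / M := sub_pos.2 (one_div_lt_one_div_of_lt hw hwM)
    set D : ℝ := (c * k).toReal * (1 / M) ^ (1 / M) / (A * (1 / w) ^ (1 / w)) with hD
    have hT := (tendsto_rpow_atTop hexp).eventually_gt_atTop D
    obtain ⟨X, hX, hX1, hXM⟩ :=
      (hT.and ((eventually_ge_atTop 1).and (eventually_ge_atTop M))).exists
    have hX0 : 0 < X := by linarith
    have hkey := key (1 / X) (by positivity) (by rw [div_le_one hX0]; exact hX1)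
      (one_div_le_one_div_of_le hM hXM)
    have e : ∀ r : ℝ, 0 < r → (1 / (r * (1 / X))) ^ (1 / r) = (1 / r) ^ (1 / r) * X ^ (1 / r) := by
      intro r hr
      rw [← Real.mul_rpow (by positivity) hX0.le]
      congr 1
      field_simp
    rw [e w hw, e M hM] at hkey
    have e2 : X ^ (1 / w) = X ^ (1 / w - 1 / M) * X ^ (1 / M) := by
      rw [← Real.rpow_add hX0]; congr 1; ring
    have hXp : 0 < X ^ (1 / M) := by positivity
    rw [e2, ← mul_assoc, ← mul_assoc, ← mul_assoc, mul_le_mul_iff_left₀ hXp] at hkey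
    rw [hD, div_lt_iff₀ (by positivity)] at hX
    linarith
end

section
/- Let Ω = Ω₁ × ⋯ × Ω_d, where each Ω_i ⊆ ℝ is Lebesgue-measurable of finite Lebesgue measure with (0,1] ⊆ Ω_i, equipped with Lebesgue measure, let p⃗ = (p₁,…,p_d) with 0 < p_i ≤ ∞ and 0 < min{p₁,…,p_d} < ∞, and let 0 < q ≤ ∞. Then the additional growth-envelope index of L_{p⃗,q}(Ω) (taken with respect to the envelope t^{-1/min{p₁,…,p_d}}) equals q: the Hardy-type inequality ( ∫_0^ε ( t^{1/min{p₁,…,p_d}} f^*(t) )^v dt/t )^{1/v} ≤ c ‖f‖_{L_{p⃗,q}} (for some ε, c > 0 and all f ∈ L_{p⃗,q}(Ω)) holds for v = q and fails for every 0 < v < q. -/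
open MeasureTheory ENNReal Set Filter

noncomputable section
lemma lpNorm1_eq_eLpNorm {α : Type} [MeasurableSpace α] (p : ℝ≥0∞) (hp : 0 < p) (μ : Measure α)
    (g : α → ℝ≥0∞) : lpNorm1 p μ g = eLpNorm g p μ := by
  unfold lpNorm1
  split_ifs with h
  · subst h
    simp [eLpNorm_exponent_top, eLpNormEssSup]
  · rw [eLpNorm_eq_lintegral_rpow_enorm_toReal hp.ne' h]
    simp

lemma measurable_lpNorm1 {β : Type} [MeasurableSpace β] (p : ℝ≥0∞) (μ : Measure ℝ)
    [IsFiniteMeasure μ] (F : ℝ × β → ℝ≥0∞) (hF : Measurable F) :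
    Measurable fun y => lpNorm1 p μ fun x => F (x, y) := by
  unfold lpNorm1
  split_ifs with h
  · refine measurable_of_Iic fun a => ?_
    have : (fun y => essSup (fun x => F (x, y)) μ) ⁻¹' Iic a
        = {y | μ ((fun x => (x, y)) ⁻¹' (F ⁻¹' Ioi a)) = 0} := by
      ext y
      simp only [mem_preimage, mem_Iic, mem_ofPred_eq]
      constructor
      · intro hy
        have h1 := ENNReal.ae_le_essSup (μ := μ) (fun x => F (x, y))
        have h2 : ∀ᵐ x ∂μ, F (x, y) ≤ a := h1.mono fun x hx => hx.trans hy
        rw [ae_iff] at h2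
        convert h2 using 2
        ext x; simp
      · intro hy
        refine essSup_le_of_ae_le a ?_
        change ∀ᵐ x ∂μ, F (x, y) ≤ a
        rw [ae_iff]
        convert hy using 2
        ext x; simp
    rw [this]
    exact measurable_measure_prodMk_right (hF measurableSet_Ioi) (measurableSet_singleton 0)
  · exact (Measurable.lintegral_prod_left' (f := fun z => F z ^ p.toReal)
      (hF.pow_const _)).pow_const _

lemma lower_mixed (m : ℝ≥0∞) (hm : 0 < m) (hm' : m < ∞) : ∀ (d : ℕ) (μ : Fin d → Measure ℝ)
    (_ : ∀ i, IsFiniteMeasure (μ i)) (p : Fin d → ℝ≥0∞) (_ : ∀ i, m ≤ p i),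
    ∃ C : ℝ≥0∞, C < ∞ ∧ ∀ f : (Fin d → ℝ) → ℝ≥0∞, Measurable f →
      (∫⁻ x, f x ^ m.toReal ∂(Measure.pi μ)) ^ (1 / m.toReal) ≤ C * mixedNormE μ p f := by
  have hP : 0 < m.toReal := ENNReal.toReal_pos hm.ne' hm'.ne
  intro d
  induction d with
  | zero =>
    intro μ _ p _
    refine ⟨1, by simp, fun f hf => ?_⟩
    rw [Measure.pi_of_empty, lintegral_dirac]
    simp only [mixedNormE, one_mul]
    rw [← ENNReal.rpow_mul, mul_one_div_cancel hP.ne', ENNReal.rpow_one]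
    apply le_of_eq
    congr 1
  | succ d ih =>
    intro μ hμ p hp
    obtain ⟨C, hC, H⟩ := ih (fun i => μ i.succ) (fun i => hμ _) (fun i => p i.succ) (fun i => hp _)
    have hex : 0 ≤ 1 / m.toReal - 1 / (p 0).toReal := by
      rcases eq_or_ne (p 0) ∞ with h | h
      · rw [h]; simp
      · have := ENNReal.toReal_mono h (hp 0)
        exact sub_nonneg.2 (one_div_le_one_div_of_le hP this)
    set K := μ 0 univ ^ (1 / m.toReal - 1 / (p 0).toReal) with hK
    have hKfin : K < ∞ := ENNReal.rpow_lt_top_of_nonneg hex (measure_ne_top _ _)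
    refine ⟨K * C, ENNReal.mul_lt_top hKfin hC, fun f hf => ?_⟩
    have hcons : Measurable fun z : ℝ × (Fin d → ℝ) => (Fin.cons z.1 z.2 : Fin (d+1) → ℝ) := by
      refine measurable_pi_iff.2 fun i => ?_
      refine Fin.cases ?_ (fun i => ?_) i
      · simpa using measurable_fst
      · simp only [Fin.cons_succ]
        exact (measurable_pi_apply i).comp measurable_snd
    have hF : Measurable fun z : ℝ × (Fin d → ℝ) => f (Fin.cons z.1 z.2) := hf.comp hcons
    have e1 : ∫⁻ x, f x ^ m.toReal ∂(Measure.pi μ) =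
        ∫⁻ y, ∫⁻ x, f (Fin.cons x y) ^ m.toReal ∂(μ 0) ∂(Measure.pi fun i => μ i.succ) := by
      have mp := measurePreserving_piFinSuccAbove (fun i => μ i) 0
      have := mp.symm.lintegral_comp (f := fun x => f x ^ m.toReal) (hf.pow_const _)
      have hs : ∀ z : ℝ × (Fin d → ℝ), (MeasurableEquiv.piFinSuccAbove (fun _ => ℝ) 0).symm z =
          (Fin.cons z.1 z.2 : Fin (d+1) → ℝ) := by
        intro z
        simp [MeasurableEquiv.piFinSuccAbove, Fin.insertNthEquiv]
      simp_rw [hs, Fin.succAbove_zero] at this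
      rw [← this, lintegral_prod_symm]
      · exact (hF.pow_const _).aemeasurable
    have hg := measurable_lpNorm1 (p 0) (μ 0) _ hF
    have key : ∀ y, ∫⁻ x, f (Fin.cons x y) ^ m.toReal ∂(μ 0) ≤
        K ^ m.toReal * (lpNorm1 (p 0) (μ 0) fun x => f (Fin.cons x y)) ^ m.toReal := by
      intro y
      have hm1 : Measurable fun x => f (Fin.cons x y) := hF.comp measurable_prodMk_right
      have := eLpNorm_le_eLpNorm_mul_rpow_measure_univ (μ := μ 0) (hp 0)
        hm1.aestronglyMeasurable
      rw [← lpNorm1_eq_eLpNorm _ hm, ← lpNorm1_eq_eLpNorm _ (hm.trans_le (hp 0)), lpNorm1,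
        if_neg hm'.ne] at this
      rw [← ENNReal.mul_rpow_of_nonneg _ _ hP.le, mul_comm]
      have h2 := ENNReal.rpow_le_rpow this hP.le
      rwa [← ENNReal.rpow_mul, one_div_mul_cancel hP.ne', ENNReal.rpow_one] at h2
    have h3 := H _ hg
    calc _ ≤ (K ^ m.toReal * ∫⁻ y, (lpNorm1 (p 0) (μ 0) fun x => f (Fin.cons x y)) ^ m.toReal
              ∂(Measure.pi fun i => μ i.succ)) ^ (1 / m.toReal) := by
          rw [e1, ← lintegral_const_mul _ (hg.pow_const _)]
          exact ENNReal.rpow_le_rpow (lintegral_mono key) (by positivity)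
      _ = K * (∫⁻ y, (lpNorm1 (p 0) (μ 0) fun x => f (Fin.cons x y)) ^ m.toReal
              ∂(Measure.pi fun i => μ i.succ)) ^ (1 / m.toReal) := by
          rw [ENNReal.mul_rpow_of_nonneg _ _ (by positivity), ← ENNReal.rpow_mul,
            mul_one_div_cancel hP.ne', ENNReal.rpow_one]
      _ ≤ K * C * mixedNormE μ p f := by
          rw [mul_assoc]
          gcongr
          exact h3

lemma lower_set (m : ℝ≥0∞) (hm : 0 < m) (hm' : m < ∞) (d : ℕ) (μ : Fin d → Measure ℝ)
    (hμ : ∀ i, IsFiniteMeasure (μ i)) (p : Fin d → ℝ≥0∞) (hp : ∀ i, m ≤ p i) :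
    ∃ C : ℝ≥0∞, C < ∞ ∧ ∀ A : Set (Fin d → ℝ), MeasurableSet A →
      (Measure.pi μ A) ^ (1 / m.toReal) ≤ C * mixedNorm μ p (A.indicator fun _ => (1 : ℝ)) := by
  obtain ⟨C, hC, H⟩ := lower_mixed m hm hm' d μ hμ p hp
  have hP : 0 < m.toReal := ENNReal.toReal_pos hm.ne' hm'.ne
  refine ⟨C, hC, fun A hA => ?_⟩
  have h1 : (fun x => ENNReal.ofReal |A.indicator (fun _ => (1 : ℝ)) x|)
      = A.indicator fun _ => (1 : ℝ≥0∞) := by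
    ext x
    by_cases hx : x ∈ A <;> simp [hx]
  have h2 := H (A.indicator fun _ => (1 : ℝ≥0∞)) (measurable_const.indicator hA)
  unfold mixedNorm
  rw [h1]
  convert h2 using 2
  have : (fun x => (A.indicator (fun _ => (1 : ℝ≥0∞)) x) ^ m.toReal) = A.indicator 1 := by
    ext x
    by_cases hx : x ∈ A <;> simp [hx, hP]
  rw [this, lintegral_indicator_one hA]

lemma mixed_mono : ∀ (d : ℕ) (μ : Fin d → Measure ℝ)
    (p : Fin d → ℝ≥0∞) (f g : (Fin d → ℝ) → ℝ≥0∞) (_ : f ≤ g),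
      mixedNormE μ p f ≤ mixedNormE μ p g := by
  intro d
  induction d with
  | zero => intro μ p f g h; exact h _
  | succ d ih =>
    intro μ p f g h
    simp only [mixedNormE]
    refine ih _ _ _ _ fun y => ?_
    unfold lpNorm1
    split_ifs with h1
    · exact essSup_mono_ae (Eventually.of_forall fun x => h _)
    · refine ENNReal.rpow_le_rpow (lintegral_mono fun x => ENNReal.rpow_le_rpow (h _) (by simp))
        (by positivity)

lemma mixed_box : ∀ (d : ℕ) (μ : Fin d → Measure ℝ)
    (p : Fin d → ℝ≥0∞) (_ : ∀ i, 0 < p i) (g : Fin d → ℝ → ℝ≥0∞) (_ : ∀ i, Measurable (g i))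
    (c : ℝ≥0∞), 
      mixedNormE μ p (fun x => c * ∏ i, g i (x i)) = c * ∏ i, lpNorm1 (p i) (μ i) (g i) := by
  intro d
  induction d with
  | zero => intro μ p hp g h c; simp [mixedNormE]
  | succ d ih =>
    intro μ p hp g hg c
    simp only [mixedNormE]
    have : ∀ y : Fin d → ℝ, (lpNorm1 (p 0) (μ 0) fun x =>
          c * ∏ i, g i ((Fin.cons x y : Fin (d+1) → ℝ) i)) =
        (c * lpNorm1 (p 0) (μ 0) (g 0)) * ∏ i : Fin d, g i.succ (y i) := by
      intro y
      have e : (fun x => c * ∏ i, g i ((Fin.cons x y : Fin (d+1) → ℝ) i)) =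
          fun x => (c * ∏ i : Fin d, g i.succ (y i)) * g 0 x := by
        ext x
        rw [Fin.prod_univ_succ]
        simp only [Fin.cons_zero, Fin.cons_succ]
        ring
      rw [e]
      have : lpNorm1 (p 0) (μ 0) (fun x => (c * ∏ i : Fin d, g i.succ (y i)) * g 0 x) =
          (c * ∏ i : Fin d, g i.succ (y i)) * lpNorm1 (p 0) (μ 0) (g 0) := by
        generalize (c * ∏ i : Fin d, g i.succ (y i)) = K
        unfold lpNorm1
        split_ifs with h
        · exact ENNReal.essSup_const_mul
        · have hP : 0 < (p 0).toReal := ENNReal.toReal_pos (hp 0).ne' h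
          simp_rw [ENNReal.mul_rpow_of_nonneg _ _ hP.le]
          rw [lintegral_const_mul _ ((hg 0).pow_const _),
            ENNReal.mul_rpow_of_nonneg _ _ (by positivity), ← ENNReal.rpow_mul,
            mul_one_div_cancel hP.ne', ENNReal.rpow_one]
      rw [this]; ring
    simp_rw [this]
    rw [ih _ _ (fun i => hp _) (fun i => g i.succ) (fun i => hg _), Fin.prod_univ_succ, mul_assoc]

lemma powint_real (r : ℝ) (hr : 0 < r) (b : ℝ) (hb : 0 ≤ b) :
    ∫⁻ s in Ioc (0 : ℝ) b, ENNReal.ofReal s ^ r / ENNReal.ofReal s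
      = ENNReal.ofReal b ^ r / ENNReal.ofReal r := by
  have h1 : ∫⁻ s in Ioc (0 : ℝ) b, ENNReal.ofReal s ^ r / ENNReal.ofReal s =
      ∫⁻ s in Ioc (0 : ℝ) b, ENNReal.ofReal (s ^ (r - 1)) := by
    refine setLIntegral_congr_fun measurableSet_Ioc fun s hs => ?_
    have hs0 : 0 < s := hs.1
    rw [Real.rpow_sub_one hs0.ne', ENNReal.ofReal_div_of_pos hs0,
      ENNReal.ofReal_rpow_of_pos hs0]
  have hint := intervalIntegral.intervalIntegrable_rpow' (a := 0) (b := b) (r := r - 1)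
    (by linarith)
  rw [h1, ← ofReal_integral_eq_lintegral_ofReal, ← intervalIntegral.integral_of_le hb,
    integral_rpow (Or.inl (by linarith))]
  · rw [sub_add_cancel, Real.zero_rpow hr.ne', sub_zero, ENNReal.ofReal_div_of_pos hr,
      ENNReal.ofReal_rpow_of_nonneg hb hr.le]
  · exact (intervalIntegrable_iff_integrableOn_Ioc_of_le hb).1 hint
  · filter_upwards [ae_restrict_mem measurableSet_Ioc] with s hs
    exact Real.rpow_nonneg hs.1.le _

lemma powint (r : ℝ) (hr : 0 < r) (a : ℝ≥0∞) :
    ∫⁻ s in Ioi (0 : ℝ), (if ENNReal.ofReal s < a then ENNReal.ofReal s ^ r / ENNReal.ofReal s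
        else 0) = a ^ r / ENNReal.ofReal r := by
  have fin : ∀ b : ℝ, 0 ≤ b → ∫⁻ s in Ioi (0 : ℝ), (if ENNReal.ofReal s < ENNReal.ofReal b then
      ENNReal.ofReal s ^ r / ENNReal.ofReal s else 0) = ENNReal.ofReal b ^ r / ENNReal.ofReal r := by
    intro b hb
    rw [← powint_real r hr b hb, setLIntegral_congr (s := Ioc 0 b) (t := Ioo 0 b)
      Ioo_ae_eq_Ioc.symm, ← lintegral_indicator measurableSet_Ioi,
      ← lintegral_indicator measurableSet_Ioo]
    congr 1
    ext s
    by_cases h0 : 0 < s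
    · have : ENNReal.ofReal s < ENNReal.ofReal b ↔ s < b := by
        rw [ENNReal.ofReal_lt_ofReal_iff']
        constructor
        · exact fun h => h.1
        · exact fun h => ⟨h, h0.trans h⟩
      simp [indicator, h0, this]
    · simp [indicator, h0]
  rcases eq_or_ne a ∞ with h | h
  · subst h
    rw [ENNReal.top_rpow_of_pos hr, ENNReal.top_div_of_ne_top (by simp)]
    rw [eq_top_iff]
    refine ENNReal.le_of_forall_nnreal_lt fun x hx => ?_
    set b : ℝ := ((x : ℝ) * r) ^ (1 / r) with hb
    have hb0 : 0 ≤ b := by positivity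
    have : (x : ℝ≥0∞) = ENNReal.ofReal b ^ r / ENNReal.ofReal r := by
      rw [ENNReal.ofReal_rpow_of_nonneg hb0 hr.le, hb, ← Real.rpow_mul (by positivity),
        one_div_mul_cancel hr.ne', Real.rpow_one, ← ENNReal.ofReal_div_of_pos hr,
        mul_div_cancel_right₀ _ hr.ne', ENNReal.ofReal_coe_nnreal]
    rw [this, ← fin b hb0]
    refine lintegral_mono fun s => ?_
    simp only [ENNReal.ofReal_lt_top, if_true]
    split_ifs <;> simp
  · have := fin a.toReal ENNReal.toReal_nonneg
    rwa [ENNReal.ofReal_toReal h] at this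

lemma lt_rearr {α : Type} [MeasurableSpace α] {μ : Measure α} {f : α → ℝ} {t : ℝ} {s : ℝ≥0∞}
    (h : s < rearr μ f t) : ENNReal.ofReal t < μ {x | s < ENNReal.ofReal |f x|} := by
  by_contra h'
  have h2 : rearr μ f t ≤ s := sInf_le (show s ∈ _ from not_lt.1 h')
  exact absurd h2 (not_le.2 h)

lemma levelset {α : Type} (f : α → ℝ) (s : ℝ) (hs : 0 < s) :
    {x | ENNReal.ofReal s < ENNReal.ofReal |f x|} = {x | s < |f x|} := by
  ext x
  simp only [mem_ofPred_eq]
  rw [ENNReal.ofReal_lt_ofReal_iff']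
  exact ⟨fun h => h.1, fun h => ⟨h, hs.trans h⟩⟩

lemma hardy_le {α : Type} [MeasurableSpace α] (μ : Measure α) [IsFiniteMeasure μ]
    (P : ℝ) (hP : 0 < P) (q : ℝ≥0∞) (hq : 0 < q) (f : α → ℝ) (n : ℝ → ℝ≥0∞) (C : ℝ≥0∞)
    (hC : C < ∞)
    (hn : ∀ u > 0, (μ {x | u < |f x|}) ^ (1 / P) ≤ C * n u) :
    hardy μ (1 / P) q 1 f ≤ (ENNReal.ofReal P ^ (1 / q.toReal) * C) *
      (if q = ∞ then ⨆ (u : ℝ) (_ : 0 < u), ENNReal.ofReal u * n u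
      else (∫⁻ u in Ioi (0 : ℝ), (ENNReal.ofReal u * n u) ^ q.toReal
          / ENNReal.ofReal u) ^ (1 / q.toReal)) := by
  unfold hardy
  split_ifs with h
  · subst h
    simp only [ENNReal.toReal_top, _root_.div_zero, ENNReal.rpow_zero, one_mul]
    refine iSup₂_le fun t ht => ?_
    rw [mul_comm]
    refine ENNReal.mul_le_of_forall_lt fun s hs t' ht' => ?_
    have hs' : s ≠ ∞ := hs.ne_top
    rcases eq_or_ne s 0 with h0 | h0
    · simp [h0]
    have hpos : 0 < s.toReal := ENNReal.toReal_pos h0 hs'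
    have h1 := lt_rearr hs
    rw [← ENNReal.ofReal_toReal hs', levelset f _ hpos] at h1
    calc s * t' ≤ s * (C * n s.toReal) := by
          gcongr
          exact ht'.le.trans ((ENNReal.rpow_le_rpow h1.le (by positivity)).trans (hn _ hpos))
      _ = C * (ENNReal.ofReal s.toReal * n s.toReal) := by
          rw [ENNReal.ofReal_toReal hs']; ring
      _ ≤ _ := by
          gcongr
          exact le_iSup₂ (f := fun (u : ℝ) (_ : 0 < u) => ENNReal.ofReal u * n u) _ hpos
  · have hQ : 0 < q.toReal := ENNReal.toReal_pos hq.ne' h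
    set Q := q.toReal
    have hlam : Antitone fun s : ℝ => μ {x | s < |f x|} := fun a b hab =>
      measure_mono fun x hx => lt_of_le_of_lt hab hx
    have key : ∫⁻ t in Ioo (0 : ℝ) 1,
        (ENNReal.ofReal t ^ (1 / P) * rearr μ f t) ^ Q / ENNReal.ofReal t ≤
        ENNReal.ofReal P * (C ^ Q * ∫⁻ u in Ioi (0 : ℝ), (ENNReal.ofReal u * n u) ^ Q
          / ENNReal.ofReal u) := by
      set G : ℝ → ℝ → ℝ≥0∞ := fun t s =>
        if ENNReal.ofReal t < μ {x | s < |f x|} then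
          (ENNReal.ofReal s ^ Q / ENNReal.ofReal s) * (ENNReal.ofReal t ^ (Q / P) / ENNReal.ofReal t)
        else 0 with hG
      have hGm : Measurable (Function.uncurry G) := by
        refine Measurable.ite ?_ ?_ measurable_const
        · exact measurableSet_lt (ENNReal.measurable_ofReal.comp measurable_fst)
            (hlam.measurable.comp measurable_snd)
        · fun_prop
      calc _ ≤ ∫⁻ t in Ioi (0 : ℝ), 
            (ENNReal.ofReal t ^ (1 / P) * rearr μ f t) ^ Q / ENNReal.ofReal t :=
            lintegral_mono_set fun x hx => hx.1
        _ ≤ ∫⁻ t in Ioi (0 : ℝ), ENNReal.ofReal Q * ∫⁻ s in Ioi (0 : ℝ), G t s := by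
            refine setLIntegral_mono' measurableSet_Ioi fun t ht => ?_
            have ht0 : 0 < t := ht
            have e1 : (ENNReal.ofReal t ^ (1 / P) * rearr μ f t) ^ Q / ENNReal.ofReal t =
                rearr μ f t ^ Q * (ENNReal.ofReal t ^ (Q / P) / ENNReal.ofReal t) := by
              rw [ENNReal.mul_rpow_of_nonneg _ _ hQ.le, ← ENNReal.rpow_mul, one_div_mul_eq_div]
              simp only [div_eq_mul_inv]
              ring
            have hfin : ENNReal.ofReal t ^ (Q / P) / ENNReal.ofReal t ≠ ∞ := by
              refine (ENNReal.div_lt_top ?_ ?_).ne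
              · exact ENNReal.rpow_ne_top_of_nonneg (by positivity) (by simp)
              · simpa using ht0
            have e2 : rearr μ f t ^ Q = ENNReal.ofReal Q * ∫⁻ s in Ioi (0 : ℝ),
                (if ENNReal.ofReal s < rearr μ f t then ENNReal.ofReal s ^ Q / ENNReal.ofReal s
                else 0) := by
              rw [powint Q hQ, ENNReal.mul_div_cancel (by simpa using hQ) (by simp)]
            rw [e1, e2, mul_assoc, ← lintegral_mul_const' _ _ hfin]
            refine mul_le_mul_right ?_ _
            refine setLIntegral_mono' measurableSet_Ioi fun s hs => ?_
            have hs0 : 0 < s := hs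
            simp only [hG]
            split_ifs with h1 h2 h2
            · exact le_rfl
            · have := lt_rearr h1
              rw [levelset f s hs0] at this
              exact absurd this h2
            · simp
            · simp
        _ = ENNReal.ofReal Q * ∫⁻ s in Ioi (0 : ℝ), ∫⁻ t in Ioi (0 : ℝ), G t s := by
            rw [lintegral_const_mul' _ _ (by simp), lintegral_lintegral_swap hGm.aemeasurable]
        _ ≤ ENNReal.ofReal Q * ∫⁻ s in Ioi (0 : ℝ), (ENNReal.ofReal (P / Q) * C ^ Q) *
              ((ENNReal.ofReal s * n s) ^ Q / ENNReal.ofReal s) := by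
            gcongr 1
            refine setLIntegral_mono' measurableSet_Ioi fun s hs => ?_
            have hs0 : 0 < s := hs
            have hfin : ENNReal.ofReal s ^ Q / ENNReal.ofReal s ≠ ∞ := by
              refine (ENNReal.div_lt_top ?_ ?_).ne
              · exact ENNReal.rpow_ne_top_of_nonneg (by positivity) (by simp)
              · simpa using hs0
            have e : ∫⁻ t in Ioi (0 : ℝ), G t s = (ENNReal.ofReal s ^ Q / ENNReal.ofReal s) *
                ((μ {x | s < |f x|}) ^ (Q / P) / ENNReal.ofReal (Q / P)) := by
              rw [← powint (Q / P) (by positivity), ← lintegral_const_mul' _ _ hfin]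
              simp only [hG]
              congr 1
              ext t
              split_ifs <;> simp
            rw [e]
            have e3 : (μ {x | s < |f x|}) ^ (Q / P) ≤ C ^ Q * n s ^ Q := by
              have := ENNReal.rpow_le_rpow (hn s hs0) hQ.le
              rwa [← ENNReal.rpow_mul, one_div_mul_eq_div,
                ENNReal.mul_rpow_of_nonneg _ _ hQ.le] at this
            calc _ ≤ (ENNReal.ofReal s ^ Q / ENNReal.ofReal s) *
                ((C ^ Q * n s ^ Q) / ENNReal.ofReal (Q / P)) := by gcongr
              _ = _ := by
                have : (ENNReal.ofReal (Q / P))⁻¹ = ENNReal.ofReal (P / Q) := by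
                  rw [← ENNReal.ofReal_inv_of_pos (by positivity), inv_div]
                rw [ENNReal.mul_rpow_of_nonneg _ _ hQ.le]
                simp only [div_eq_mul_inv] at this ⊢
                rw [this]
                ring
        _ = _ := by
            rw [lintegral_const_mul' _ _ (ENNReal.mul_ne_top (by simp)
              (ENNReal.rpow_ne_top_of_nonneg hQ.le hC.ne)), ← mul_assoc, ← mul_assoc, ← mul_assoc,
              ← ENNReal.ofReal_mul hQ.le, mul_div_cancel₀ _ hQ.ne']
    refine (ENNReal.rpow_le_rpow key (by positivity)).trans ?_
    rw [ENNReal.mul_rpow_of_nonneg _ _ (by positivity),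
      ENNReal.mul_rpow_of_nonneg _ _ (by positivity), ← ENNReal.rpow_mul,
      mul_one_div_cancel hQ.ne', ENNReal.rpow_one, mul_assoc]

lemma final_contra (P θ κ a : ℝ) (hP : 0 < P) (hθ : 0 ≤ θ) (h : θ < κ) (c : ℝ≥0∞) (hc : c < ∞)
    (H : ∀ L : ℝ, 0 < L → ENNReal.ofReal (a + P * L) ^ κ ≤ c * ENNReal.ofReal (θ + L) ^ θ) :
    False := by
  have hκ : 0 < κ := hθ.trans_lt h
  have t1 := tendsto_rpow_atTop (sub_pos.2 h)
  have ev : ∀ᶠ L : ℝ in atTop, c.toReal * 2 ^ θ * (2 / P) ^ κ < L ^ (κ - θ) :=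
    t1.eventually_gt_atTop _
  obtain ⟨L, h1, h2, h3, h4⟩ := (ev.and ((eventually_gt_atTop 0).and
    ((eventually_ge_atTop θ).and (eventually_ge_atTop (-(2 * a) / P))))).exists
  have h5 := H L h2
  have h6 : P * L / 2 ≤ a + P * L := by
    rw [div_le_iff₀ hP] at h4
    linarith
  have h7 : (P * L / 2) ^ κ ≤ c.toReal * (2 * L) ^ θ := by
    have e1 : ENNReal.ofReal ((P * L / 2) ^ κ) ≤ ENNReal.ofReal (c.toReal * (2 * L) ^ θ) := by
      rw [ENNReal.ofReal_mul ENNReal.toReal_nonneg, ENNReal.ofReal_toReal hc.ne,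
        ← ENNReal.ofReal_rpow_of_nonneg (by positivity) hκ.le,
        ← ENNReal.ofReal_rpow_of_nonneg (by positivity) hθ]
      refine (ENNReal.rpow_le_rpow (ENNReal.ofReal_le_ofReal h6) hκ.le).trans (h5.trans ?_)
      gcongr
      linarith
    exact (ENNReal.ofReal_le_ofReal_iff (by positivity)).1 e1
  have e2 : P * L / 2 = L / (2 / P) := by field_simp
  rw [e2, Real.div_rpow h2.le (by positivity), Real.mul_rpow (by norm_num) h2.le,
    div_le_iff₀ (by positivity)] at h7
  rw [Real.rpow_sub h2, lt_div_iff₀ (by positivity)] at h1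
  nlinarith

/-- Sides of the test box. -/
def tbox {d : ℕ} (j : Fin d) (s : ℝ) (i : Fin d) : Set ℝ := Ioc 0 (if i = j then s else 1)

lemma tbox_meas_one {d : ℕ} (Ω : Fin d → Set ℝ)
    (hΩsub : ∀ i, Set.Ioc (0 : ℝ) 1 ⊆ Ω i) (j : Fin d) (s : ℝ) (hs1 : s ≤ 1) (i : Fin d) :
    volume.restrict (Ω i) (tbox j s i) = if i = j then ENNReal.ofReal s else 1 := by
  have : tbox j s i ⊆ Ω i := by
    refine subset_trans (Ioc_subset_Ioc_right ?_) (hΩsub i)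
    split_ifs <;> simp [hs1]
  rw [Measure.restrict_eq_self _ this]
  unfold tbox
  rw [Real.volume_Ioc]
  split_ifs <;> simp

lemma tbox_meas {d : ℕ} (Ω : Fin d → Set ℝ) (hΩfin : ∀ i, volume (Ω i) < ∞)
    (hΩsub : ∀ i, Set.Ioc (0 : ℝ) 1 ⊆ Ω i) (j : Fin d) (s : ℝ) (hs1 : s ≤ 1) :
    Measure.pi (fun i => volume.restrict (Ω i)) (univ.pi (tbox j s)) = ENNReal.ofReal s := by
  have : ∀ i, IsFiniteMeasure (volume.restrict (Ω i)) := fun i =>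
    ⟨by simpa using hΩfin i⟩
  rw [Measure.pi_pi]
  simp_rw [tbox_meas_one Ω hΩsub j s hs1]
  simp

lemma tbox_norm {d : ℕ} (Ω : Fin d → Set ℝ)
    (hΩsub : ∀ i, Set.Ioc (0 : ℝ) 1 ⊆ Ω i) (p : Fin d → ℝ≥0∞) (hp : ∀ i, 0 < p i)
    (j : Fin d) (hj : p j ≠ ∞) (s : ℝ) (hs1 : s ≤ 1) (A : Set (Fin d → ℝ))
    (hA : A ⊆ univ.pi (tbox j s)) :
    mixedNorm (fun i => volume.restrict (Ω i)) p (A.indicator fun _ => (1 : ℝ)) ≤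
      ENNReal.ofReal s ^ (1 / (p j).toReal) := by
  have hm : ∀ i, MeasurableSet (tbox j s i) := fun i => measurableSet_Ioc
  calc _ ≤ mixedNormE (fun i => volume.restrict (Ω i)) p
        (fun x => 1 * ∏ i, (tbox j s i).indicator (fun _ => (1 : ℝ≥0∞)) (x i)) := by
        refine mixed_mono _ _ _ _ _ fun x => ?_
        by_cases hx : x ∈ A
        · have : ∀ i, x i ∈ tbox j s i := fun i => hA hx i (mem_univ i)
          simp [hx, this]
        · simp [hx]
    _ = ∏ i, lpNorm1 (p i) (volume.restrict (Ω i))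
          ((tbox j s i).indicator (fun _ => (1 : ℝ≥0∞))) := by
        rw [mixed_box _ _ _ hp _ (fun i => measurable_const.indicator (hm i)), one_mul]
    _ ≤ ∏ i, (if i = j then ENNReal.ofReal s ^ (1 / (p j).toReal) else 1) := by
        refine Finset.prod_le_prod' fun i _ => ?_
        unfold lpNorm1
        split_ifs with h1 h2 h2
        · subst h2; exact absurd h1 hj
        · refine essSup_le_of_ae_le _ (Eventually.of_forall fun x => ?_)
          exact indicator_le_self' (fun _ _ => by simp) x
        all_goals
          have hP : 0 < (p i).toReal := ENNReal.toReal_pos (hp i).ne' h1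
          have e : (fun x => ((tbox j s i).indicator (fun _ => (1 : ℝ≥0∞)) x) ^ (p i).toReal)
              = (tbox j s i).indicator 1 := by
            ext x
            by_cases hx : x ∈ tbox j s i <;> simp [hx, hP]
          rw [e, lintegral_indicator_one (hm i), tbox_meas_one Ω hΩsub j s hs1]
          simp [h2]
    _ = _ := by simp

open Classical in
/-- The extremal function. -/
def tfun {d : ℕ} (j : Fin d) (P δ : ℝ) (x : Fin d → ℝ) : ℝ :=
  if x ∈ univ.pi (tbox j 1) then (max (x j) δ) ^ (-(1 / P)) else 0

lemma tfun_meas {d : ℕ} (j : Fin d) (P δ : ℝ) : Measurable (tfun j P δ) := by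
  unfold tfun
  refine Measurable.ite (MeasurableSet.univ_pi fun i => measurableSet_Ioc) ?_ measurable_const
  fun_prop

lemma tfun_rearr {d : ℕ} (Ω : Fin d → Set ℝ) (hΩfin : ∀ i, volume (Ω i) < ∞)
    (hΩsub : ∀ i, Set.Ioc (0 : ℝ) 1 ⊆ Ω i) (j : Fin d) (P δ : ℝ) (hP : 0 < P) (hδ : 0 < δ)
    (t : ℝ) (ht : δ < t) (ht1 : t < 1) :
    ENNReal.ofReal (t ^ (-(1 / P))) ≤
      rearr (Measure.pi fun i => volume.restrict (Ω i)) (tfun j P δ) t := by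
  have ht0 : 0 < t := hδ.trans ht
  refine le_sInf fun s hs => ?_
  by_contra! hlt
  have hs' : s ≠ ∞ := hlt.ne_top
  have hcont : ContinuousAt (fun y : ℝ => ENNReal.ofReal (y ^ (-(1 / P)))) t :=
    ENNReal.continuous_ofReal.continuousAt.comp
      (Real.continuousAt_rpow_const t _ (Or.inl ht0.ne'))
  have ev1 : ∀ᶠ y in nhdsWithin t (Ioi t), s < ENNReal.ofReal (y ^ (-(1 / P))) :=
    (hcont.eventually (lt_mem_nhds hlt)).filter_mono nhdsWithin_le_nhds
  have ev2 : ∀ᶠ y in nhdsWithin t (Ioi t), y ∈ Ioo t 1 := Ioo_mem_nhdsGT ht1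
  obtain ⟨y, hy1, hy2, hy3⟩ := (ev1.and ev2).exists
  have hs2 : Measure.pi (fun i => volume.restrict (Ω i))
      {x | s < ENNReal.ofReal |tfun j P δ x|} ≤ ENNReal.ofReal t := hs
  have hsub : univ.pi (tbox j y) ⊆ {x | s < ENNReal.ofReal |tfun j P δ x|} := by
    intro x hx
    have hx1 : x ∈ univ.pi (tbox j 1) := by
      intro i hi
      have := hx i hi
      refine Ioc_subset_Ioc_right ?_ this
      split_ifs <;> simp [hy3.le]
    have hxj : x j ≤ y := by
      have := (hx j (mem_univ j)).2
      simpa using this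
    have hmax : max (x j) δ ≤ y := max_le hxj (ht.trans hy2).le
    have hle : y ^ (-(1 / P)) ≤ (max (x j) δ) ^ (-(1 / P)) :=
      Real.rpow_le_rpow_of_nonpos (lt_max_of_lt_right hδ) hmax (by simp [hP.le])
    change s < ENNReal.ofReal |tfun j P δ x|
    unfold tfun
    rw [if_pos hx1]
    exact hy1.trans_le (ENNReal.ofReal_le_ofReal (hle.trans (le_abs_self _)))
  have := (measure_mono hsub).trans hs2
  rw [tbox_meas Ω hΩfin hΩsub j y hy3.le, ENNReal.ofReal_le_ofReal_iff ht0.le] at this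
  linarith

lemma log_lint (a b : ℝ) (ha : 0 < a) (hab : a ≤ b) :
    ∫⁻ t in Ioc a b, 1 / ENNReal.ofReal t = ENNReal.ofReal (Real.log (b / a)) := by
  rw [← integral_one_div_of_pos ha (ha.trans_le hab), intervalIntegral.integral_of_le hab,
    ofReal_integral_eq_lintegral_ofReal]
  · refine setLIntegral_congr_fun measurableSet_Ioc fun t ht => ?_
    have : 0 < t := ha.trans ht.1
    rw [ENNReal.ofReal_div_of_pos this, ENNReal.ofReal_one]
  · refine (intervalIntegrable_iff_integrableOn_Ioc_of_le hab).1 ?_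
    refine intervalIntegral.intervalIntegrable_one_div ?_ continuousOn_id
    intro x hx
    rw [uIcc_of_le hab] at hx
    exact (ha.trans_le hx.1).ne'
  · filter_upwards [ae_restrict_mem measurableSet_Ioc] with t ht
    have : 0 < t := ha.trans ht.1
    simp [this.le]

lemma tfun_hardy {d : ℕ} (Ω : Fin d → Set ℝ) (hΩfin : ∀ i, volume (Ω i) < ∞)
    (hΩsub : ∀ i, Set.Ioc (0 : ℝ) 1 ⊆ Ω i) (j : Fin d) (P δ : ℝ) (hP : 0 < P) (hδ : 0 < δ)
    (v : ℝ≥0∞) (hv : 0 < v) (hv' : v < ∞) (ε : ℝ) (hε : 0 < ε) :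
    ENNReal.ofReal (Real.log (min ε 1 / δ)) ^ (1 / v.toReal) ≤
      hardy (Measure.pi fun i => volume.restrict (Ω i)) (1 / P) v ε (tfun j P δ) := by
  have hV : 0 < v.toReal := ENNReal.toReal_pos hv.ne' hv'.ne
  unfold hardy
  rw [if_neg hv'.ne]
  refine ENNReal.rpow_le_rpow ?_ (by positivity)
  rcases lt_or_ge (min ε 1) δ with hlt | hle
  · have : Real.log (min ε 1 / δ) ≤ 0 := by
      apply Real.log_nonpos
      · have : 0 < min ε 1 := by positivity
        positivity
      · rw [div_le_one hδ]; exact hlt.le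
    rw [ENNReal.ofReal_of_nonpos this]
    exact zero_le
  rw [← log_lint δ _ hδ hle, setLIntegral_congr Ioo_ae_eq_Ioc.symm]
  calc _ ≤ ∫⁻ t in Ioo δ (min ε 1), (ENNReal.ofReal t ^ (1 / P) *
        rearr (Measure.pi fun i => volume.restrict (Ω i)) (tfun j P δ) t) ^ v.toReal
          / ENNReal.ofReal t := by
        refine setLIntegral_mono' measurableSet_Ioo fun t ht => ?_
        have ht1 : t < 1 := ht.2.trans_le (min_le_right _ _)
        have ht0 : 0 < t := hδ.trans ht.1
        have h1 := tfun_rearr Ω hΩfin hΩsub j P δ hP hδ t ht.1 ht1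
        refine ENNReal.div_le_div_right ?_ _
        apply ENNReal.one_le_rpow _ hV
        calc (1 : ℝ≥0∞) = ENNReal.ofReal t ^ (1 / P) * ENNReal.ofReal (t ^ (-(1 / P))) := by
              rw [ENNReal.ofReal_rpow_of_pos ht0, ← ENNReal.ofReal_mul (by positivity),
                ← Real.rpow_add ht0]
              simp
          _ ≤ _ := by gcongr
    _ ≤ _ := lintegral_mono_set (Ioo_subset_Ioo hδ.le (min_le_left _ _))

lemma tfun_lorentz {d : ℕ} (Ω : Fin d → Set ℝ)
    (hΩsub : ∀ i, Set.Ioc (0 : ℝ) 1 ⊆ Ω i) (p : Fin d → ℝ≥0∞) (hp : ∀ i, 0 < p i)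
    (j : Fin d) (hj : p j ≠ ∞) (N : ℝ) (hN : 1 < N) (q : ℝ≥0∞) (hq : 0 < q) :
    mixedLorentzNorm (fun i => volume.restrict (Ω i)) p q
      (tfun j (p j).toReal (N ^ (-(p j).toReal))) ≤
      ENNReal.ofReal (1 / q.toReal + Real.log N) ^ (1 / q.toReal) := by
  have hP : 0 < (p j).toReal := ENNReal.toReal_pos (hp j).ne' hj
  set P := (p j).toReal with hPdef
  set δ := N ^ (-P) with hδdef
  have hN0 : 0 < N := by linarith
  have hδ : 0 < δ := by positivity
  set n : ℝ → ℝ≥0∞ := fun u => mixedNorm (fun i => volume.restrict (Ω i)) p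
    ({x | u < |tfun j P δ x|}.indicator fun _ => (1 : ℝ)) with hn
  have hin : ∀ u > 0, ∀ x, u < |tfun j P δ x| → x ∈ univ.pi (tbox j 1) ∧
      u < (max (x j) δ) ^ (-(1 / P)) := by
    intro u hu x hx
    unfold tfun at hx
    split_ifs at hx with h
    · rw [abs_of_nonneg (Real.rpow_nonneg (le_max_of_le_right hδ.le) _)] at hx
      exact ⟨h, hx⟩
    · simp at hx; linarith
  have n1 : ∀ u > 0, n u ≤ 1 := by
    intro u hu
    refine (tbox_norm Ω hΩsub p hp j hj 1 le_rfl _ fun x hx => (hin u hu x hx).1).trans ?_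
    simp
  have n2 : ∀ u, 1 ≤ u → ENNReal.ofReal u * n u ≤ 1 := by
    intro u hu
    have hu0 : 0 < u := by linarith
    have hb : n u ≤ ENNReal.ofReal (u ^ (-P)) ^ (1 / P) := by
      refine tbox_norm Ω hΩsub p hp j hj _
        (Real.rpow_le_one_of_one_le_of_nonpos hu (by linarith)) _ fun x hx => ?_
      obtain ⟨h1, h2⟩ := hin u hu0 x hx
      intro i hi
      refine ⟨(h1 i hi).1, ?_⟩
      split_ifs with hij
      · subst hij
        have hM : 0 < max (x i) δ := lt_max_of_lt_right hδ
        have h3 := Real.rpow_le_rpow_of_nonpos hu0 h2.le (z := -P) (by linarith)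
        rw [← Real.rpow_mul hM.le] at h3
        have : -(1 / P) * -P = 1 := by field_simp
        rw [this, Real.rpow_one] at h3
        exact (le_max_left _ _).trans h3
      · have := (h1 i hi).2
        rwa [if_neg hij] at this
    calc _ ≤ ENNReal.ofReal u * ENNReal.ofReal (u ^ (-P)) ^ (1 / P) := by gcongr
      _ = 1 := by
        rw [ENNReal.ofReal_rpow_of_pos (by positivity), ← ENNReal.ofReal_mul hu0.le,
          ← Real.rpow_mul hu0.le]
        have : -P * (1 / P) = -1 := by field_simp
        rw [this, Real.rpow_neg_one, mul_inv_cancel₀ hu0.ne', ENNReal.ofReal_one]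
  have n3 : ∀ u, N ≤ u → n u = 0 := by
    intro u hu
    have hu0 : 0 < u := by linarith
    have : {x | u < |tfun j P δ x|} = ∅ := by
      refine eq_empty_of_forall_notMem fun x hx => ?_
      have h2 := (hin u hu0 x hx).2
      have h3 := Real.rpow_le_rpow_of_nonpos hδ (le_max_right (x j) δ) (z := -(1 / P))
        (by simp [hP.le])
      rw [hδdef, ← Real.rpow_mul hN0.le] at h3
      have : -P * -(1 / P) = 1 := by field_simp
      rw [this, Real.rpow_one] at h3
      linarith
    have h0 := mixed_box d (fun i => volume.restrict (Ω i)) p hp (fun _ _ => 1)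
      (fun _ => measurable_const) 0
    simp only [zero_mul] at h0
    simp only [hn, this, mixedNorm, indicator_empty, abs_zero, ENNReal.ofReal_zero]
    exact h0
  unfold mixedLorentzNorm
  split_ifs with h
  · subst h
    simp only [ENNReal.toReal_top, _root_.div_zero, ENNReal.rpow_zero]
    refine iSup₂_le fun u hu => ?_
    rcases le_total 1 u with h1 | h1
    · exact n2 u h1
    · calc _ ≤ ENNReal.ofReal 1 * 1 := mul_le_mul' (ENNReal.ofReal_le_ofReal h1) (n1 u hu)
        _ = 1 := by simp
  · have hQ : 0 < q.toReal := ENNReal.toReal_pos hq.ne' h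
    set Q := q.toReal
    refine ENNReal.rpow_le_rpow ?_ (by positivity)
    change ∫⁻ u in Ioi (0 : ℝ), (ENNReal.ofReal u * n u) ^ Q / ENNReal.ofReal u ≤ _
    have hsplit : Ioi (0 : ℝ) ⊆ (Ioc 0 1 ∪ Ioc 1 N) ∪ Ioi N := by
      intro u hu
      have hu : 0 < u := hu
      rcases le_or_gt u 1 with h1 | h1
      · exact Or.inl (Or.inl ⟨hu, h1⟩)
      · rcases le_or_gt u N with h2 | h2
        · exact Or.inl (Or.inr ⟨h1, h2⟩)
        · exact Or.inr h2
    calc _ ≤ ∫⁻ u in (Ioc 0 1 ∪ Ioc 1 N) ∪ Ioi N,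
          (ENNReal.ofReal u * n u) ^ Q / ENNReal.ofReal u := lintegral_mono_set hsplit
      _ ≤ ((∫⁻ u in Ioc 0 1, (ENNReal.ofReal u * n u) ^ Q / ENNReal.ofReal u) +
          ∫⁻ u in Ioc 1 N, (ENNReal.ofReal u * n u) ^ Q / ENNReal.ofReal u) +
          ∫⁻ u in Ioi N, (ENNReal.ofReal u * n u) ^ Q / ENNReal.ofReal u :=
          (lintegral_union_le _ _ _).trans (add_le_add_left (lintegral_union_le _ _ _) _)
      _ ≤ (ENNReal.ofReal (1 / Q) + ENNReal.ofReal (Real.log N)) + 0 := by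
          refine add_le_add (add_le_add ?_ ?_) ?_
          · have := powint_real Q hQ 1 zero_le_one
            rw [ENNReal.ofReal_one, ENNReal.one_rpow] at this
            rw [ENNReal.ofReal_div_of_pos hQ, ENNReal.ofReal_one, ← this]
            refine setLIntegral_mono' measurableSet_Ioc fun u hu => ?_
            refine ENNReal.div_le_div_right (ENNReal.rpow_le_rpow ?_ hQ.le) _
            exact mul_le_of_le_one_right' (n1 u hu.1)
          · have := log_lint 1 N one_pos hN.le
            rw [_root_.div_one] at this
            rw [← this]
            refine setLIntegral_mono' measurableSet_Ioc fun u hu => ?_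
            exact ENNReal.div_le_div_right (ENNReal.rpow_le_one (n2 u hu.1.le) hQ.le) _
          · rw [nonpos_iff_eq_zero]
            rw [setLIntegral_congr_fun (g := fun _ => 0) measurableSet_Ioi]
            · simp
            · intro u hu
              simp [n3 u (le_of_lt hu), hQ]
      _ = _ := by
          rw [add_zero, ENNReal.ofReal_add (by positivity) (Real.log_nonneg hN.le)]

end

/-- The additional growth-envelope index of `L_{p⃗,q}(Ω)` equals `q`:
the Hardy-type inequality (with respect to the envelope `t^{-1/min{p₁,…,p_d}}`) holds for
`v = q` and fails for every `0 < v < q`. -/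
theorem statement8 (d : ℕ) (hd : 0 < d) (Ω : Fin d → Set ℝ)
    (hΩmeas : ∀ i, MeasurableSet (Ω i)) (hΩfin : ∀ i, volume (Ω i) < ∞)
    (hΩsub : ∀ i, Set.Ioc (0 : ℝ) 1 ⊆ Ω i)
    (p : Fin d → ℝ≥0∞) (hp : ∀ i, 0 < p i)
    (hminpos : 0 < ⨅ i, p i) (hminfin : ⨅ i, p i < ∞)
    (q : ℝ≥0∞) (hq : 0 < q) :
    (∃ ε > (0 : ℝ), ∃ c : ℝ≥0∞, 0 < c ∧ c < ∞ ∧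
      ∀ f : (Fin d → ℝ) → ℝ, Measurable f →
        mixedLorentzNorm (fun i => volume.restrict (Ω i)) p q f < ∞ →
        hardy (Measure.pi fun i => volume.restrict (Ω i)) (1 / (⨅ i, p i).toReal) q ε f ≤
          c * mixedLorentzNorm (fun i => volume.restrict (Ω i)) p q f) ∧
    (∀ v : ℝ≥0∞, 0 < v → v < q →
      ¬ ∃ ε > (0 : ℝ), ∃ c : ℝ≥0∞, c < ∞ ∧
        ∀ f : (Fin d → ℝ) → ℝ, Measurable f →
          mixedLorentzNorm (fun i => volume.restrict (Ω i)) p q f < ∞ →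
          hardy (Measure.pi fun i => volume.restrict (Ω i)) (1 / (⨅ i, p i).toReal) v ε f ≤
            c * mixedLorentzNorm (fun i => volume.restrict (Ω i)) p q f) := by
  have hfinM : ∀ i, IsFiniteMeasure (volume.restrict (Ω i)) := fun i =>
    ⟨by simpa using hΩfin i⟩
  have hne : Nonempty (Fin d) := ⟨⟨0, hd⟩⟩
  have hP : 0 < (⨅ i, p i).toReal := ENNReal.toReal_pos hminpos.ne' hminfin.ne
  constructor
  · obtain ⟨C, hC, H⟩ := lower_set (⨅ i, p i) hminpos hminfin d (fun i => volume.restrict (Ω i))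
      hfinM p (fun i => iInf_le _ i)
    set P := (⨅ i, p i).toReal
    have hfin : ENNReal.ofReal P ^ (1 / q.toReal) * C < ∞ :=
      ENNReal.mul_lt_top (ENNReal.rpow_lt_top_of_nonneg (by positivity) (by simp)) hC
    refine ⟨1, one_pos, ENNReal.ofReal P ^ (1 / q.toReal) * C + 1, by simp,
      ENNReal.add_lt_top.2 ⟨hfin, by simp⟩, fun f hf _ => ?_⟩
    have := hardy_le (Measure.pi fun i => volume.restrict (Ω i)) P hP q hq f
      (fun u => mixedNorm (fun i => volume.restrict (Ω i)) p
        ({x | u < |f x|}.indicator fun _ => (1 : ℝ))) C hC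
      (fun u hu => H _ (measurableSet_lt measurable_const hf.abs))
    exact this.trans (mul_le_mul_left le_self_add _)
  · rintro v hv hvq ⟨ε, hε, c, hc, H⟩
    obtain ⟨j, hj⟩ := exists_eq_ciInf_of_finite (f := p)
    rw [← hj] at hP hminfin H
    have hv' : v < ∞ := hvq.trans_le le_top
    have hV : 0 < v.toReal := ENNReal.toReal_pos hv.ne' hv'.ne
    refine final_contra (p j).toReal (1 / q.toReal) (1 / v.toReal) (Real.log (min ε 1)) hP
      (by positivity) ?_ c hc fun L hL => ?_
    · rcases eq_or_ne q ∞ with h | h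
      · simp [h, hV]
      · exact one_div_lt_one_div_of_lt hV ((ENNReal.toReal_lt_toReal hv'.ne h).2 hvq)
    · have hN : 1 < Real.exp L := Real.one_lt_exp_iff.2 hL
      have h1 := tfun_lorentz Ω hΩsub p hp j hminfin.ne (Real.exp L) hN q hq
      rw [Real.log_exp] at h1
      have h2 := tfun_hardy Ω hΩfin hΩsub j (p j).toReal (Real.exp L ^ (-(p j).toReal)) hP
        (by positivity) v hv hv' ε hε
      have hm : 0 < min ε 1 := by positivity
      have e : Real.log (min ε 1 / Real.exp L ^ (-(p j).toReal)) =
          Real.log (min ε 1) + (p j).toReal * L := by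
        rw [Real.log_div hm.ne' (by positivity), Real.log_rpow (Real.exp_pos _), Real.log_exp]
        ring
      rw [e] at h2
      refine h2.trans ((H _ (tfun_meas _ _ _) (h1.trans_lt ?_)).trans (mul_le_mul_right h1 _))
      exact ENNReal.rpow_lt_top_of_nonneg (by positivity) (by simp)
end

section
/- Let Ω ⊆ ℝ^d be Lebesgue-measurable and let p(·) : Ω → (0,∞) be a measurable exponent function with p_- > 0 and p_+ < ∞. Then for every 0 < t < μ(Ω), the growth envelope function of L_{p(·)} satisfies E_G(L_{p(·)})(t) ≥ sup{ ‖χ_{A}‖_{p(·)}^{-1} : A ⊆ Ω measurable, μ(A) = t }. -/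
open MeasureTheory ENNReal Set Filter

/-- A set of positive measure contains subsets of arbitrarily small positive measure. -/
theorem exists_small_subset {d : ℕ} (hd : d ≠ 0) (S : Set (EuclideanSpace ℝ (Fin d)))
    (hS : MeasurableSet S) (hpos : volume S ≠ 0) (δ : ℝ≥0∞) (hδ : 0 < δ) :
    ∃ D ⊆ S, MeasurableSet D ∧ 0 < volume D ∧ volume D < δ := by
  have : Nonempty (Fin d) := ⟨⟨0, Nat.pos_of_ne_zero hd⟩⟩
  obtain ⟨x, hx, hxn⟩ := exists_mem_forall_mem_nhdsWithin_pos_measure hpos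
  obtain ⟨U, hU, hUo, hUm⟩ := Set.exists_isOpen_lt_of_lt (μ := volume) {x} δ (by simpa using hδ)
  refine ⟨S ∩ U, inter_subset_left, hS.inter hUo.measurableSet, ?_, ?_⟩
  · exact hxn _ (inter_mem_nhdsWithin S (hUo.mem_nhds (hU rfl)))
  · exact (measure_mono inter_subset_right).trans_lt hUm

/-- Lower bound for the growth envelope function of the variable Lebesgue
space: `E_G(L_{p(·)})(t) ≥ sup{ ‖χ_A‖_{p(·)}⁻¹ : A ⊆ Ω measurable, μ(A) = t }`
for `0 < t < μ(Ω)`. -/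
theorem statement10 (d : ℕ) (Ω : Set (EuclideanSpace ℝ (Fin d))) (hΩ : MeasurableSet Ω)
    (p : EuclideanSpace ℝ (Fin d) → ℝ) (hpmeas : Measurable p) (hp0 : ∀ x ∈ Ω, 0 < p x)
    (hpm : 0 < essInf p (volume.restrict Ω))
    (hpp : IsBoundedUnder (· ≤ ·) (ae (volume.restrict Ω)) p)
    (t : ℝ) (ht : 0 < t) (htΩ : ENNReal.ofReal t < volume Ω) :
    (⨆ (A : Set (EuclideanSpace ℝ (Fin d))) (_ : MeasurableSet A) (_ : A ⊆ Ω)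
        (_ : volume A = ENNReal.ofReal t),
        (varNorm (volume.restrict Ω) p (A.indicator fun _ => (1 : ℝ)))⁻¹) ≤
      growthEnv (volume.restrict Ω) (varNorm (volume.restrict Ω) p) t := by
  refine iSup_le fun A => iSup_le fun hA => iSup_le fun hAΩ => iSup_le fun hAt => ?_
  have hd : d ≠ 0 := by
    rintro rfl
    have hne : A.Nonempty := by
      rw [Set.nonempty_iff_ne_empty]
      rintro rfl
      simp at hAt
      linarith
    have : A = Ω := by
      rw [Subsingleton.eq_univ_of_nonempty hne, Subsingleton.eq_univ_of_nonempty (hne.mono hAΩ)]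
    rw [← this, hAt] at htΩ
    exact lt_irrefl _ htΩ
  refine ENNReal.le_of_forall_nnreal_lt fun c hc => ?_
  rcases eq_or_ne c 0 with rfl | hc0
  · simp
  have hcpos : (0 : ℝ) < c := by exact_mod_cast pos_iff_ne_zero.mpr hc0
  have hN : varNorm (volume.restrict Ω) p (A.indicator fun _ => (1 : ℝ)) < (c : ℝ≥0∞)⁻¹ :=
    ENNReal.lt_inv_iff_lt_inv.mp hc
  unfold varNorm at hN
  simp only [iInf_lt_iff] at hN
  obtain ⟨l, hl, hmod, hlc⟩ := hN
  have hcl : (c : ℝ) < 1 / l := by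
    rw [← ENNReal.coe_inv hc0, ← ENNReal.ofReal_coe_nnreal,
      ENNReal.ofReal_lt_ofReal_iff_of_nonneg hl.le, NNReal.coe_inv] at hlc
    rw [lt_div_iff₀ hl]
    calc (c : ℝ) * l < c * (c : ℝ)⁻¹ := by gcongr
      _ = 1 := mul_inv_cancel₀ hcpos.ne'
  have h1 : ∫⁻ x in A, ENNReal.ofReal ((1 / l) ^ p x) ≤ 1 := by
    refine le_trans ?_ hmod
    unfold varModular
    calc ∫⁻ x in A, ENNReal.ofReal ((1 / l) ^ p x)
        = ∫⁻ x in A, ENNReal.ofReal (|A.indicator (fun _ => (1 : ℝ)) x / l| ^ p x) := by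
          refine setLIntegral_congr_fun hA fun x hx => ?_
          simp [indicator_of_mem hx, abs_of_pos hl]
      _ ≤ _ := lintegral_mono_set hAΩ
  have h2 : ∫⁻ x in A, ENNReal.ofReal ((c : ℝ) ^ p x) < 1 := by
    refine lt_of_lt_of_le ?_ h1
    refine setLIntegral_strict_mono hA ?_ (by fun_prop) ?_ ?_
    · rw [hAt]; simpa using ht
    · refine ne_top_of_le_ne_top one_ne_top (le_trans ?_ h1)
      refine setLIntegral_mono' hA fun x hx => ?_
      exact ENNReal.ofReal_le_ofReal (Real.rpow_le_rpow hcpos.le hcl.le (hp0 x (hAΩ hx)).le)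
    · refine Eventually.of_forall fun x hx => ?_
      exact (ENNReal.ofReal_lt_ofReal_iff_of_nonneg (by positivity)).2
        (Real.rpow_lt_rpow hcpos.le hcl (hp0 x (hAΩ hx)))
  obtain ⟨M, hM⟩ := hpp
  rw [eventually_map, ae_restrict_iff' hΩ] at hM
  obtain ⟨K, hK1, hK⟩ : ∃ K : ℝ, 1 ≤ K ∧ ∀ q : ℝ, 0 < q → q ≤ M → (c : ℝ) ^ q ≤ K := by
    refine ⟨max 1 ((c : ℝ) ^ M), le_max_left _ _, fun q hq hqM => ?_⟩
    rcases le_total (c : ℝ) 1 with h | h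
    · exact le_max_of_le_left (Real.rpow_le_one hcpos.le h hq.le)
    · exact le_max_of_le_right (Real.rpow_le_rpow_of_exponent_le h hqM)
  have hK0 : ENNReal.ofReal K ≠ 0 := by simpa using by linarith
  have hdiff : volume (Ω \ A) ≠ 0 := by
    intro h
    have : volume Ω ≤ volume A := by
      calc volume Ω ≤ volume (Ω \ A) + volume A := by
            refine (measure_mono ?_).trans (measure_union_le _ _)
            rw [sdiff_union_self]; exact subset_union_left
        _ = volume A := by rw [h, zero_add]
    rw [hAt] at this
    exact absurd htΩ this.not_gt
  obtain ⟨D, hDs, hD, hDpos, hDlt⟩ := exists_small_subset hd (Ω \ A) (hΩ.diff hA) hdiff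
    ((1 - ∫⁻ x in A, ENNReal.ofReal ((c : ℝ) ^ p x)) / ENNReal.ofReal K)
    (ENNReal.div_pos (tsub_pos_of_lt h2).ne' ofReal_ne_top)
  have hBΩ : A ∪ D ⊆ Ω := union_subset hAΩ (hDs.trans sdiff_subset)
  have hdisj : Disjoint A D := disjoint_left.2 fun x hx hx' => (hDs hx').2 hx
  have hBm : MeasurableSet (A ∪ D) := hA.union hD
  have hB : ENNReal.ofReal t < volume (A ∪ D) := by
    rw [measure_union hdisj hD, hAt]
    exact ENNReal.lt_add_right ofReal_ne_top hDpos.ne'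
  have hBmod : varModular (volume.restrict Ω) p
      (fun x => (A ∪ D).indicator (fun _ => (c : ℝ)) x / 1) ≤ 1 := by
    unfold varModular
    calc ∫⁻ x in Ω, ENNReal.ofReal (|(A ∪ D).indicator (fun _ => (c : ℝ)) x / 1| ^ p x)
        = ∫⁻ x in Ω, (A ∪ D).indicator (fun x => ENNReal.ofReal ((c : ℝ) ^ p x)) x := by
          refine setLIntegral_congr_fun hΩ fun x hx => ?_
          by_cases hxB : x ∈ A ∪ D
          · simp only [indicator_of_mem hxB, div_one, abs_of_pos hcpos]
          · simp [indicator_of_notMem hxB, Real.zero_rpow (hp0 x hx).ne']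
      _ = ∫⁻ x in A ∪ D, ENNReal.ofReal ((c : ℝ) ^ p x) := by
          rw [setLIntegral_indicator hBm, inter_eq_left.2 hBΩ]
      _ = (∫⁻ x in A, ENNReal.ofReal ((c : ℝ) ^ p x))
          + ∫⁻ x in D, ENNReal.ofReal ((c : ℝ) ^ p x) := lintegral_union hD hdisj
      _ ≤ (∫⁻ x in A, ENNReal.ofReal ((c : ℝ) ^ p x)) + ∫⁻ x in D, ENNReal.ofReal K := by
          refine add_le_add le_rfl ?_
          refine lintegral_mono_ae ?_
          rw [ae_restrict_iff' hD]
          filter_upwards [hM] with x hx hxD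
          have hxΩ := (hDs hxD).1
          exact ENNReal.ofReal_le_ofReal (hK _ (hp0 x hxΩ) (hx hxΩ))
      _ ≤ (∫⁻ x in A, ENNReal.ofReal ((c : ℝ) ^ p x))
          + (1 - ∫⁻ x in A, ENNReal.ofReal ((c : ℝ) ^ p x)) := by
          refine add_le_add le_rfl ?_
          rw [setLIntegral_const, mul_comm]
          exact (ENNReal.le_div_iff_mul_le (Or.inl hK0) (Or.inl ofReal_ne_top)).1 hDlt.le
      _ = 1 := add_tsub_cancel_of_le h2.le
  have hnorm : varNorm (volume.restrict Ω) p ((A ∪ D).indicator (fun _ => (c : ℝ))) ≤ 1 := by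
    unfold varNorm
    refine (iInf₂_le_of_le 1 one_pos (iInf_le_of_le hBmod ?_))
    simp
  unfold growthEnv
  refine le_iSup_of_le ((A ∪ D).indicator (fun _ => (c : ℝ))) (le_iSup_of_le
    (measurable_const.indicator hBm) (le_iSup_of_le hnorm ?_))
  unfold rearr
  refine le_sInf fun s hs => ?_
  by_contra! hsc
  refine absurd hB (not_lt.2 (le_trans ?_ hs))
  rw [← inter_eq_left.2 hBΩ, ← Measure.restrict_apply hBm, inter_eq_left.2 hBΩ]
  refine measure_mono fun x hx => ?_
  simpa [indicator_of_mem hx] using hsc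
end

section
/- Let p(·) : ℝ^d → (0,∞) be a measurable exponent function with 0 < p_- ≤ p_+ < ∞, and let x₀ ∈ ℝ^d be such that p(x₀) = p_-, the essential infimum of p over every ball B_r(x₀) equals p_-, and p(·) is locally log-Hölder continuous at x₀. Then there exists a constant C > 0 such that for all r > 0, ∫_{B_r(x₀)} μ(B_r(x₀))^{−p(x)/p_-} dx ≤ C. -/
open MeasureTheory ENNReal Set Filter

/-- If `0 < p_- ≤ p_+ < ∞`, `p(x₀) = p_-`, the essential infimum of `p`
over every ball `B_r(x₀)` equals `p_-`, and `p(·)` is locally log-Hölder continuous at `x₀`,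
then there is `C > 0` with `∫_{B_r(x₀)} μ(B_r(x₀))^{−p(x)/p_-} dx ≤ C` for all `r > 0`. -/
theorem statement13 (d : ℕ) (p : EuclideanSpace ℝ (Fin d) → ℝ) (hpmeas : Measurable p)
    (hp0 : ∀ x, 0 < p x)
    (hpm : 0 < essInf p (volume : Measure (EuclideanSpace ℝ (Fin d))))
    (hpp : IsBoundedUnder (· ≤ ·) (ae (volume : Measure (EuclideanSpace ℝ (Fin d)))) p)
    (x₀ : EuclideanSpace ℝ (Fin d))
    (hx₀ : p x₀ = essInf p (volume : Measure (EuclideanSpace ℝ (Fin d))))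
    (hballs : ∀ r > (0 : ℝ), essInf p (volume.restrict (Metric.ball x₀ r)) =
      essInf p (volume : Measure (EuclideanSpace ℝ (Fin d))))
    (hLH : LocLogHolderAt p x₀) :
    ∃ C > (0 : ℝ), ∀ r > (0 : ℝ),
      (∫⁻ x in Metric.ball x₀ r,
          volume (Metric.ball x₀ r) ^
            (-(p x) / essInf p (volume : Measure (EuclideanSpace ℝ (Fin d))))) ≤
        ENNReal.ofReal C := by
  have hge : ∀ᵐ x ∂(volume : Measure (EuclideanSpace ℝ (Fin d))), p x₀ ≤ p x := by
    rw [hx₀]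
    exact ae_essInf_le ⟨0, by
      rw [eventually_map]
      exact Eventually.of_forall fun x => (hp0 x).le⟩
  rw [← hx₀]
  obtain ⟨M, hM⟩ := hpp
  rw [eventually_map] at hM
  obtain ⟨C₀, hC₀, hC⟩ := hLH
  have hm : 0 < p x₀ := hp0 x₀
  generalize hmm : p x₀ = m at *
  set c : ℝ := (volume (Metric.ball (0 : EuclideanSpace ℝ (Fin d)) 1)).toReal with hc
  have hcpos : 0 < c :=
    ENNReal.toReal_pos (Metric.measure_ball_pos volume _ one_pos).ne' measure_ball_lt_top.ne
  have hvol : ∀ r > (0 : ℝ), volume (Metric.ball x₀ r) = ENNReal.ofReal (r ^ d * c) := by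
    intro r hr
    rw [Measure.addHaar_ball_of_pos volume x₀ hr, ENNReal.ofReal_mul (by positivity), hc,
      ENNReal.ofReal_toReal measure_ball_lt_top.ne]
    simp
  have hl2 : 0 < Real.log 2 := Real.log_pos (by norm_num)
  set K : ℝ := C₀ * (|Real.log c| / Real.log 2 + d) + |M - m| * (|Real.log c| + d * Real.log 2)
    with hK
  have hK1 : 0 ≤ C₀ * (|Real.log c| / Real.log 2 + d) := by positivity
  have hK2 : 0 ≤ |M - m| * (|Real.log c| + d * Real.log 2) := by positivity
  have key : ∀ r > (0 : ℝ), ∀ᵐ x ∂(volume : Measure (EuclideanSpace ℝ (Fin d))),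
      x ∈ Metric.ball x₀ r → (p x - m) * (-Real.log (r ^ d * c)) ≤ K := by
    intro r hr
    filter_upwards [hge, hM] with x h1 h2 hx
    rw [Metric.mem_ball] at hx
    have hlog : Real.log (r ^ d * c) = d * Real.log r + Real.log c := by
      rw [Real.log_mul (by positivity) hcpos.ne', Real.log_pow]
    rw [hlog]
    have hcabs : -Real.log c ≤ |Real.log c| := neg_le_abs _
    rcases lt_or_ge r (1 / 2) with hr2 | hr2
    · have hL : Real.log 2 ≤ -Real.log r := by
        rw [← Real.log_inv]
        apply Real.log_le_log (by norm_num)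
        rw [le_inv_comm₀ (by norm_num) hr]
        linarith
      have hLpos : 0 < -Real.log r := by linarith
      have hpx : p x - m ≤ C₀ / (-Real.log r) := by
        rcases (dist_nonneg (x := x) (y := x₀)).eq_or_lt with h0 | h0
        · have : x = x₀ := dist_eq_zero.1 h0.symm
          rw [this, hmm, sub_self]
          positivity
        · have hlt := Real.log_lt_log h0 hx
          calc p x - m ≤ |p x - m| := le_abs_self _
            _ ≤ C₀ / (-Real.log (dist x x₀)) := hC x (by linarith)
            _ ≤ C₀ / (-Real.log r) := by
              apply div_le_div_of_nonneg_left hC₀.le hLpos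
              linarith
      have hb : |Real.log c| ≤ |Real.log c| / Real.log 2 * (-Real.log r) := by
        rw [div_mul_eq_mul_div, le_div_iff₀ hl2]
        exact mul_le_mul_of_nonneg_left hL (abs_nonneg _)
      calc (p x - m) * (-(d * Real.log r + Real.log c))
          ≤ (p x - m) * ((|Real.log c| / Real.log 2 + d) * (-Real.log r)) := by
            apply mul_le_mul_of_nonneg_left _ (by linarith)
            linarith
        _ ≤ C₀ / (-Real.log r) * ((|Real.log c| / Real.log 2 + d) * (-Real.log r)) := by
            apply mul_le_mul_of_nonneg_right hpx
            positivity
        _ = C₀ * (|Real.log c| / Real.log 2 + d) := by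
            have hne : Real.log r ≠ 0 := (neg_pos.1 hLpos).ne
            field_simp
        _ ≤ K := by linarith
    · have hL : -Real.log r ≤ Real.log 2 := by
        rw [← Real.log_inv]
        apply Real.log_le_log (by positivity)
        rw [inv_le_comm₀ hr (by norm_num)]
        linarith
      have hd : (d : ℝ) * (-Real.log r) ≤ d * Real.log 2 :=
        mul_le_mul_of_nonneg_left hL (by positivity)
      calc (p x - m) * (-(d * Real.log r + Real.log c))
          ≤ (p x - m) * (|Real.log c| + d * Real.log 2) := by
            apply mul_le_mul_of_nonneg_left _ (by linarith)
            linarith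
        _ ≤ |M - m| * (|Real.log c| + d * Real.log 2) := by
            apply mul_le_mul_of_nonneg_right _ (by positivity)
            exact le_trans (by linarith) (le_abs_self _)
        _ ≤ K := by linarith
  refine ⟨Real.exp (K / m), Real.exp_pos _, fun r hr => ?_⟩
  have hV : 0 < r ^ d * c := by positivity
  have hk := key r hr
  rw [hvol r hr]
  generalize hVr : r ^ d * c = V at *
  calc (∫⁻ x in Metric.ball x₀ r, ENNReal.ofReal V ^ (-(p x) / m))
      ≤ ∫⁻ x in Metric.ball x₀ r, ENNReal.ofReal (V⁻¹ * Real.exp (K / m)) := by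
        apply lintegral_mono_ae
        rw [ae_restrict_iff' Metric.isOpen_ball.measurableSet]
        filter_upwards [hk] with x hx hxb
        rw [ENNReal.ofReal_rpow_of_pos hV]
        apply ENNReal.ofReal_le_ofReal
        have e1 : V⁻¹ = Real.exp (-Real.log V) := by rw [Real.exp_neg, Real.exp_log hV]
        rw [Real.rpow_def_of_pos hV, e1, ← Real.exp_add]
        apply Real.exp_le_exp.2
        have := div_le_div_of_nonneg_right (hx hxb) hm.le
        have e2 : Real.log V * (-(p x) / m)
            = -Real.log V + (p x - m) * (-Real.log V) / m := by
          field_simp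
          ring
        linarith
    _ = ENNReal.ofReal (Real.exp (K / m)) := by
        rw [setLIntegral_const, hvol r hr, hVr, ← ENNReal.ofReal_mul (by positivity)]
        congr 1
        field_simp
    _ ≤ _ := le_rfl
end

section
/- Let p(·) : ℝ^d → (0,∞) be a measurable exponent function with 0 < p_- ≤ p_+ < ∞ which is locally log-Hölder continuous at every point, and suppose there exists x₀ ∈ ℝ^d such that p(x₀) = p_- and the essential infimum of p over every ball B_r(x₀) equals p_-. Then there exists C > 0 such that the growth envelope function of L_{p(·)}(ℝ^d) satisfies E_G(L_{p(·)})(t) ≤ C · t^{-1/p_-} for all 0 < t ≤ 1. -/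
open MeasureTheory ENNReal Set Filter

/-- Upper estimate for the growth envelope function of `L_{p(·)}(ℝ^d)`:
if `0 < p_- ≤ p_+ < ∞`, `p(·)` is locally log-Hölder continuous, and `p` attains its
essential infimum at `x₀` (also over every ball centred at `x₀`), then
`E_G(L_{p(·)})(t) ≤ C · t^{-1/p_-}` for `0 < t ≤ 1`. -/
theorem statement15 (d : ℕ) (p : EuclideanSpace ℝ (Fin d) → ℝ) (hpmeas : Measurable p)
    (hp0 : ∀ x, 0 < p x)
    (hpm : 0 < essInf p (volume : Measure (EuclideanSpace ℝ (Fin d))))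
    (hpp : IsBoundedUnder (· ≤ ·) (ae (volume : Measure (EuclideanSpace ℝ (Fin d)))) p)
    (hLH : LocLogHolder p)
    (x₀ : EuclideanSpace ℝ (Fin d))
    (hx₀ : p x₀ = essInf p (volume : Measure (EuclideanSpace ℝ (Fin d))))
    (hballs : ∀ r > (0 : ℝ), essInf p (volume.restrict (Metric.ball x₀ r)) =
      essInf p (volume : Measure (EuclideanSpace ℝ (Fin d)))) :
    ∃ C > (0 : ℝ), ∀ t : ℝ, 0 < t → t ≤ 1 →
      growthEnv (volume : Measure (EuclideanSpace ℝ (Fin d))) (varNorm volume p) t ≤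
        ENNReal.ofReal C *
          ENNReal.ofReal
            (t ^ (-(1 / essInf p (volume : Measure (EuclideanSpace ℝ (Fin d)))))) := by
  refine ⟨2, by norm_num, fun t ht ht1 => ?_⟩
  set m := essInf p (volume : Measure (EuclideanSpace ℝ (Fin d))) with hm
  have hae : ∀ᵐ x ∂(volume : Measure (EuclideanSpace ℝ (Fin d))), m ≤ p x :=
    ae_essInf_le (Filter.isBoundedUnder_of ⟨0, fun x => (hp0 x).le⟩)
  unfold growthEnv
  refine iSup_le fun f => iSup_le fun hf => iSup_le fun hN => ?_
  have hN2 : varNorm volume p f < ENNReal.ofReal 2 :=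
    lt_of_le_of_lt hN (by simp)
  unfold varNorm at hN2
  simp only [iInf_lt_iff] at hN2
  obtain ⟨l, hl, hmod, hl2⟩ := hN2
  have hl2' : l < 2 := (ENNReal.ofReal_lt_ofReal_iff (by norm_num)).1 hl2
  unfold rearr
  apply sInf_le
  set a := t ^ (-(1 / m)) with ha
  have ha1 : 1 ≤ a := Real.one_le_rpow_of_pos_of_le_one_of_nonpos ht ht1 (by
    have : 0 < 1 / m := by positivity
    linarith)
  have ham : a ^ m = t⁻¹ := by
    rw [ha, ← Real.rpow_mul ht.le, show -(1 / m) * m = -1 by field_simp, Real.rpow_neg_one]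
  have hmeas : Measurable fun x => ENNReal.ofReal (|f x / l| ^ p x) :=
    (((hf.div_const l).abs).pow hpmeas).ennreal_ofReal
  have hmk := mul_meas_ge_le_lintegral (μ := volume) hmeas (ENNReal.ofReal t⁻¹)
  have hle : volume {x | ENNReal.ofReal 2 * ENNReal.ofReal a < ENNReal.ofReal |f x|} ≤
      volume {x | ENNReal.ofReal t⁻¹ ≤ ENNReal.ofReal (|f x / l| ^ p x)} := by
    apply measure_mono_ae
    filter_upwards [hae] with x hx hxs
    change ENNReal.ofReal 2 * ENNReal.ofReal a < ENNReal.ofReal |f x| at hxs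
    change ENNReal.ofReal t⁻¹ ≤ ENNReal.ofReal (|f x / l| ^ p x)
    rw [← ENNReal.ofReal_mul (by norm_num)] at hxs
    have h2 : 2 * a < |f x| := (ENNReal.ofReal_lt_ofReal_iff_of_nonneg (by linarith)).1 hxs
    apply ENNReal.ofReal_le_ofReal
    have h3 : a ≤ |f x / l| := by
      rw [abs_div, abs_of_pos hl, le_div_iff₀ hl]
      nlinarith
    calc t⁻¹ = a ^ m := ham.symm
      _ ≤ a ^ p x := Real.rpow_le_rpow_of_exponent_le ha1 hx
      _ ≤ _ := Real.rpow_le_rpow (by linarith) h3 (hp0 x).le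
  refine hle.trans ?_
  have h4 := hmk.trans hmod
  rw [ENNReal.ofReal_inv_of_pos ht] at h4 ⊢
  have h0 : ENNReal.ofReal t ≠ 0 := by simpa using ht
  calc _ = ENNReal.ofReal t * ((ENNReal.ofReal t)⁻¹ * volume {x | (ENNReal.ofReal t)⁻¹ ≤ ENNReal.ofReal (|f x / l| ^ p x)}) := by
        rw [← mul_assoc, ENNReal.mul_inv_cancel h0 ENNReal.ofReal_ne_top, one_mul]
    _ ≤ ENNReal.ofReal t * 1 := by gcongr
    _ = _ := mul_one _
end
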